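/- arXiv:1903.04210 — 6 statements merged into one kernel-verified Lean document; each statement's English description precedes it below -/
import Mathlib

section
/- Let n ≥ 5 be an odd integer not divisible by 3, and let k be a positive integer. Then there are infinitely many odd primes p with gcd(p, k) = 1 and k² < pⁿ such that the ideal class group of the imaginary quadratic field ℚ(√(k² − pⁿ)) contains an element of order n. -/
/-!
Every prime `p > 2k + n(2k)^n` works. Put `α = k + ω`, so that `α` and its conjugate `k - ω` have
product `p ^ n` and sum `2k`, which is prime to `p`. Hence the ideals they generate are coprime and
`(α) = I ^ n` for some ideal `I` (`ideal_pow`); the class of `I` has order dividing `n`.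

If the order were a proper divisor of `n`, then `I ^ (n / l)` would be principal for some prime
`l ∣ n`, and `α` would be a unit times an `l`-th power. The units of an imaginary quadratic field
are killed by `12` (`unit_pow_twelve`) and `l` is prime to `12`, so the unit is an `l`-th power too
and `α = c ^ l`. Let `P` and `Q` be the trace and norm of `c`, which are integers
(`trace_norm_int`); then `Q = p ^ (n / l) ≥ p`, and `c ^ l` has trace `2k`.

The last point is impossible (`powerSum_ne`). As `l` is odd, `P` divides the trace `2k` of `c ^ l`,
so `|P| ≤ 2k`. That trace is `P ^ l - l * Q * P ^ (l - 2)` modulo `Q ^ 2`. Since `Q` is large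
compared with `k` and `P`, reducing modulo `Q` gives `P ^ l = 2k`, and then reducing modulo `Q ^ 2`
gives `l * P ^ (l - 2) = 0`, whereas `P ≠ 0`.
-/

open NumberField ComplexConjugate

/-! ### Power sums of the roots of an integral quadratic -/

/-- The power sum `x ^ l + y ^ l` modulo `Q ^ 2`, with `l = j + 2` to avoid subtraction. -/
lemma powerSum_expansion {x y : ℂ} {P Q : ℤ} (hs : x + y = P) (hp : x * y = Q) (j : ℕ) :
    (∃ r : ℤ, x ^ (j + 2) + y ^ (j + 2) = P ^ (j + 2) - (j + 2) * Q * P ^ j + Q ^ 2 * r) := by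
  induction j using Nat.twoStepInduction with
  | zero => exact ⟨0, by push_cast; rw [← hs, ← hp]; ring⟩
  | one => exact ⟨0, by push_cast; rw [← hs, ← hp]; ring⟩
  | more j h₀ h₁ =>
    obtain ⟨r₀, h₀⟩ := h₀
    obtain ⟨r₁, h₁⟩ := h₁
    refine ⟨P * r₁ - Q * r₀ + (j + 2) * P ^ j, ?_⟩
    have : x ^ (j + 2 + 2) + y ^ (j + 2 + 2) = (x + y) * (x ^ (j + 1 + 2) + y ^ (j + 1 + 2))
      - x * y * (x ^ (j + 2) + y ^ (j + 2)) := by ring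
    rw [this, h₀, h₁, hs, hp]
    push_cast
    ring

lemma powerSum_odd_dvd {x y : ℂ} {P Q : ℤ} (hs : x + y = P) (hp : x * y = Q) (j : ℕ) :
    ∃ s : ℤ, x ^ (2 * j + 1) + y ^ (2 * j + 1) = P * s := by
  induction j with
  | zero => exact ⟨1, by simpa using hs⟩
  | succ j ih =>
    obtain ⟨s, hs'⟩ := ih
    obtain ⟨r, hr⟩ := powerSum_expansion hs hp (2 * j)
    refine ⟨(P ^ (2 * j + 2) - (2 * j + 2) * Q * P ^ (2 * j) + Q ^ 2 * r) - Q * s, ?_⟩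
    have : x ^ (2 * (j + 1) + 1) + y ^ (2 * (j + 1) + 1) =
      (x + y) * (x ^ (2 * j + 2) + y ^ (2 * j + 2))
      - x * y * (x ^ (2 * j + 1) + y ^ (2 * j + 1)) := by ring
    rw [this, hr, hs', hs, hp]
    push_cast
    ring

/-- A power sum of odd exponent cannot equal `2k` when the product `Q` of the roots is large
compared with `k`. The sum `P` of the roots divides `2k`, so it is bounded, and the expansion of
`powerSum_expansion` is then compared with `2k` modulo `Q` and modulo `Q ^ 2`. -/
lemma powerSum_ne {x y : ℂ} {P Q : ℤ} (hs : x + y = P) (hp : x * y = Q) {n k l : ℕ}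
    (hk : 0 < k) (hl : Odd l) (hl3 : 3 ≤ l) (hln : l ≤ n)
    (hQ : 2 * (k : ℤ) + n * (2 * k) ^ n < Q) : x ^ l + y ^ l ≠ 2 * k := by
  intro h
  have hQ0 : 0 < Q := lt_of_le_of_lt (by positivity) hQ
  obtain ⟨s, h₁⟩ : ∃ s : ℤ, x ^ l + y ^ l = P * s := by
    obtain ⟨j, rfl⟩ := hl
    exact powerSum_odd_dvd hs hp j
  obtain ⟨j, rfl⟩ : ∃ j, l = j + 2 := ⟨l - 2, by omega⟩
  obtain ⟨r, h₂⟩ := powerSum_expansion hs hp j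
  rw [h] at h₁ h₂
  have h₁ : 2 * (k : ℤ) = P * s := by exact_mod_cast h₁
  have h₂ : 2 * (k : ℤ) = P ^ (j + 2) - (j + 2) * Q * P ^ j + Q ^ 2 * r := by exact_mod_cast h₂
  have hP0 : P ≠ 0 := by rintro rfl; omega
  have hPk : |P| ≤ 2 * k := Int.le_of_dvd (by omega) ((abs_dvd _ _).2 ⟨s, h₁⟩)
  have hpow : ∀ i ≤ n, |P ^ i| ≤ (2 * (k : ℤ)) ^ n := fun i hi ↦ by
    rw [abs_pow]
    exact (pow_le_pow_left₀ (abs_nonneg P) hPk i).trans (pow_le_pow_right₀ (by omega) hi)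
  have hbig : (2 * (k : ℤ)) ^ n ≤ n * (2 * k) ^ n :=
    le_mul_of_one_le_left (by positivity) (by omega)
  -- Both sides are congruent modulo `Q` and smaller than `Q` in total.
  have h₃ : P ^ (j + 2) = 2 * k := by
    have hd : Q ∣ P ^ (j + 2) - 2 * k := ⟨(j + 2) * P ^ j - Q * r, by rw [h₂]; ring⟩
    have := Int.eq_zero_of_abs_lt_dvd hd (by
      have := hpow (j + 2) hln
      have := abs_sub (P ^ (j + 2)) (2 * (k : ℤ))
      have : |2 * (k : ℤ)| = 2 * k := abs_of_nonneg (by positivity)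
      omega)
    omega
  have h₄ : Q ∣ (j + 2) * P ^ j :=
    ⟨r, mul_left_cancel₀ hQ0.ne' (by linear_combination h₂ + h₃)⟩
  have h₅ := Int.eq_zero_of_abs_lt_dvd h₄ (by
    rw [abs_mul]
    have : |((j : ℤ) + 2)| = j + 2 := abs_of_nonneg (by positivity)
    have : |((j : ℤ) + 2)| * |P ^ j| ≤ n * (2 * (k : ℤ)) ^ n :=
      mul_le_mul (by omega) (hpow j (by omega)) (abs_nonneg _) (by positivity)
    omega)
  rcases mul_eq_zero.1 h₅ with h | h
  · omega
  · exact pow_ne_zero j hP0 h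

/-! ### Imaginary quadratic fields inside `ℂ` -/

lemma rat_integral {x : ℂ} {q : ℚ} (hx : IsIntegral ℤ x) (h : x = q) : ∃ m : ℤ, x = m := by
  have : IsIntegral ℤ q := by
    rw [← isIntegral_algebraMap_iff (B := ℂ) (algebraMap ℚ ℂ).injective]
    simpa [h] using hx
  obtain ⟨m, hm⟩ := IsIntegrallyClosed.isIntegral_iff.1 this
  exact ⟨m, by rw [h, ← hm]; simp⟩

lemma conj_sqrt {z : ℂ} {D : ℕ} (hD : 0 < D) (h : z ^ 2 = -(D : ℂ)) : conj z = -z := by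
  have h1 := congrArg Complex.re h
  have h2 := congrArg Complex.im h
  have hD' : (0 : ℝ) < D := by exact_mod_cast hD
  simp [pow_two] at h1 h2
  have : z.re = 0 := by
    by_contra hne
    have : z.im = 0 := by
      have : z.re * z.im = 0 := by linarith
      simpa [hne] using this
    rw [this] at h1
    nlinarith [mul_self_nonneg z.re]
  apply Complex.ext <;> simp [this]

section
variable {K : Type} [Field K] [NumberField K]

/-- The trace and norm of an algebraic integer of an imaginary quadratic field, computed through a
complex embedding and complex conjugation, are rational integers. -/
lemma trace_norm_int {ω : K} {D : ℕ} (hD : 0 < D) (hω : ω ^ 2 = -(D : K))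
    (hK : Module.finrank ℚ K = 2) (φ : K →+* ℂ) {β : K} (hβ : IsIntegral ℤ β) :
    ∃ P Q : ℤ, φ β + conj (φ β) = P ∧ φ β * conj (φ β) = Q := by
  have hc : conj (φ ω) = - φ ω := conj_sqrt hD (by rw [← map_pow, hω]; simp)
  have hD' : (0 : ℚ) < D := by exact_mod_cast hD
  have hli : LinearIndependent ℚ ![(1 : K), ω] := by
    rw [LinearIndependent.pair_iff]
    intro s t h
    rw [Algebra.smul_def, Algebra.smul_def, mul_one] at h
    have h' : (s ^ 2 + t ^ 2 * D : ℚ) = 0 := by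
      apply (algebraMap ℚ K).injective
      have : algebraMap ℚ K (s ^ 2 + t ^ 2 * D) = 0 := by
        simp only [map_add, map_mul, map_pow, map_natCast]
        linear_combination (algebraMap ℚ K s - algebraMap ℚ K t * ω) * h +
          algebraMap ℚ K t ^ 2 * hω
      rw [this, map_zero]
    have hs : s ^ 2 = 0 := by nlinarith [sq_nonneg s, mul_nonneg (sq_nonneg t) hD'.le]
    have ht : t ^ 2 * D = 0 := by nlinarith
    refine ⟨by simpa using hs, ?_⟩
    simpa [hD.ne'] using ht
  have hspan := hli.span_eq_top_of_card_eq_finrank (by simp [hK])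
  have hmem : β ∈ Submodule.span ℚ (Set.range ![(1 : K), ω]) := hspan ▸ Submodule.mem_top
  rw [Matrix.range_cons, Matrix.range_cons, Matrix.range_empty, Set.union_empty,
    Set.singleton_union, Submodule.mem_span_pair] at hmem
  obtain ⟨a, b, rfl⟩ := hmem
  have hint : IsIntegral ℤ (φ (a • 1 + b • ω)) := hβ.map φ.toIntAlgHom
  have hint' : IsIntegral ℤ (conj (φ (a • 1 + b • ω))) :=
    hint.map (starRingEnd ℂ).toIntAlgHom
  have e1 : φ (a • 1 + b • ω) = a + b * φ ω := by simp [Algebra.smul_def]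
  have e2 : conj (φ (a • 1 + b • ω)) = a - b * φ ω := by
    rw [e1]; simp [hc, sub_eq_add_neg]
  have e3 : (φ ω) ^ 2 = -(D : ℂ) := by rw [← map_pow, hω]; simp
  obtain ⟨P, hP⟩ := rat_integral (q := 2 * a) (hint.add hint') (by
    rw [e2, e1]; push_cast; ring)
  obtain ⟨Q, hQ⟩ := rat_integral (q := a ^ 2 + b ^ 2 * D) (hint.mul hint') (by
    rw [e2, e1]; push_cast; linear_combination (-(b : ℂ) ^ 2) * e3)
  exact ⟨P, Q, hP, hQ⟩

lemma norm_nonneg_of_eq {z : ℂ} {Q : ℤ} (h : z * conj z = Q) : 0 ≤ Q := by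
  rw [Complex.mul_conj] at h
  have : Complex.normSq z = (Q : ℝ) := by exact_mod_cast h
  exact_mod_cast this ▸ Complex.normSq_nonneg z

/-- A unit of an imaginary quadratic field has norm `1` and trace `P` with `P ^ 2 ≤ 4`; each of the
five possible minimal equations forces its twelfth power to be `1`. -/
lemma unit_pow_twelve {ω : K} {D : ℕ} (hD : 0 < D) (hω : ω ^ 2 = -(D : K))
    (hK : Module.finrank ℚ K = 2) (u : (𝓞 K)ˣ) : u ^ 12 = 1 := by
  obtain ⟨φ⟩ : Nonempty (K →+* ℂ) := inferInstance
  obtain ⟨P, Q, hP, hQ⟩ := trace_norm_int hD hω hK φ (RingOfIntegers.isIntegral_coe (u : 𝓞 K))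
  obtain ⟨P', Q', -, hQ'⟩ :=
    trace_norm_int hD hω hK φ (RingOfIntegers.isIntegral_coe ((u⁻¹ : (𝓞 K)ˣ) : 𝓞 K))
  set z := φ ((u : 𝓞 K) : K) with hz
  have huv : z * φ (((u⁻¹ : (𝓞 K)ˣ) : 𝓞 K) : K) = 1 := by
    rw [hz, ← map_mul, ← map_mul, ← Units.val_mul]; simp
  have hQQ : Q * Q' = 1 := by
    have : (Q : ℂ) * Q' = 1 := by
      rw [← hQ, ← hQ', mul_mul_mul_comm, huv, ← map_mul, huv]; simp
    exact_mod_cast this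
  have hQ1 : Q = 1 := Int.eq_one_of_mul_eq_one_right (norm_nonneg_of_eq hQ) hQQ
  rw [hQ1] at hQ
  have hP4 : P ^ 2 ≤ 4 := by
    have h1 := congrArg Complex.re hP
    have h2 := congrArg Complex.re hQ
    simp at h1 h2
    have : (P : ℝ) ^ 2 ≤ 4 := by rw [← h1]; nlinarith [mul_self_nonneg z.im]
    exact_mod_cast this
  have hzz : z ^ 2 = P * z - 1 := by
    push_cast at hQ
    linear_combination z * hP - hQ
  have hz12 : z ^ 12 = 1 := by
    have h1 : -2 ≤ P := by nlinarith
    have h2 : P ≤ 2 := by nlinarith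
    interval_cases P
    · have : z = -1 := by
        have : (z + 1) ^ 2 = 0 := by push_cast at hzz; linear_combination hzz
        exact eq_neg_of_add_eq_zero_left (pow_eq_zero_iff (by norm_num) |>.1 this)
      rw [this]; norm_num
    · have : z ^ 3 = 1 := by push_cast at hzz; linear_combination (z - 1) * hzz
      rw [show 12 = 3 * 4 from rfl, pow_mul, this, one_pow]
    · have : z ^ 2 = -1 := by push_cast at hzz; linear_combination hzz
      rw [show 12 = 2 * 6 from rfl, pow_mul, this]; norm_num
    · have : z ^ 3 = -1 := by push_cast at hzz; linear_combination (z + 1) * hzz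
      rw [show 12 = 3 * 4 from rfl, pow_mul, this]; norm_num
    · have : z = 1 := by
        have : (z - 1) ^ 2 = 0 := by push_cast at hzz; linear_combination hzz
        exact sub_eq_zero.1 (pow_eq_zero_iff (by norm_num) |>.1 this)
      rw [this]; norm_num
  apply Units.ext
  apply RingOfIntegers.coe_injective
  apply φ.injective
  simpa [hz] using hz12

/-! ### The ideal class -/

/-- If `a` and its conjugate `2k - a` have product `p ^ n` and `2k` is prime to `p`, the ideal
generated by `a` is an `n`-th power. -/
lemma ideal_pow {n k p : ℕ} (hcop : Nat.Coprime (p ^ n) (2 * k)) {a : 𝓞 K}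
    (ha : a * (2 * k - a) = p ^ n) : ∃ I : Ideal (𝓞 K), Ideal.span {a} = I ^ n := by
  refine exists_eq_pow_of_mul_eq_pow (b := Ideal.span {2 * (k : 𝓞 K) - a})
    (c := Ideal.span {(p : 𝓞 K)}) ?_ ?_
  · rw [Ideal.isUnit_iff, Ideal.gcd_eq_sup, Ideal.eq_top_iff_one]
    have h1 := Nat.isCoprime_iff_coprime.2 hcop
    obtain ⟨s, t, hst⟩ := h1
    have : (1 : 𝓞 K) = (s * (2 * k - a) + t) * a + t * (2 * k - a) := by
      have : ((s * ((p ^ n : ℕ) : ℤ) + t * ((2 * k : ℕ) : ℤ) : ℤ) : 𝓞 K) = 1 := by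
        rw [hst]; simp
      push_cast at this
      linear_combination - this - s * ha
    rw [this]
    exact Submodule.add_mem_sup (Ideal.mem_span_singleton.2 (Dvd.intro_left _ rfl))
      (Ideal.mem_span_singleton.2 (Dvd.intro_left _ rfl))
  · rw [Ideal.span_singleton_mul_span_singleton, ha, Ideal.span_singleton_pow]

/-- The class group statement for a single prime, with an explicit lower bound on `p`. -/
lemma exists_order {n k p : ℕ} (hn : 5 ≤ n) (hodd : Odd n) (hn3 : ¬ 3 ∣ n) (hk : 0 < k)
    (hp : p.Prime) (hpk : 2 * k + n * (2 * k) ^ n < p) (hlt : k ^ 2 < p ^ n)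
    (ω : K) (hω : ω ^ 2 = (k : K) ^ 2 - (p : K) ^ n) (hK : Module.finrank ℚ K = 2) :
    ∃ C : ClassGroup (𝓞 K), orderOf C = n := by
  obtain ⟨D, hD⟩ : ∃ D, p ^ n = k ^ 2 + D := ⟨p ^ n - k ^ 2, by omega⟩
  have hD0 : 0 < D := by omega
  have hωD : ω ^ 2 = -(D : K) := by
    rw [hω]
    have : ((p ^ n : ℕ) : K) = ((k ^ 2 + D : ℕ) : K) := by rw [hD]
    push_cast at this
    rw [this]; ring
  have hωint : IsIntegral ℤ ω := by
    refine IsIntegral.of_pow (n := 2) two_pos ?_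
    rw [hωD]
    exact (isIntegral_natCast D).neg
  obtain ⟨w, hwω⟩ : ∃ w : 𝓞 K, (w : K) = ω := ⟨⟨ω, hωint⟩, rfl⟩
  have hw : w ^ 2 = (k : 𝓞 K) ^ 2 - (p : 𝓞 K) ^ n := by
    apply RingOfIntegers.coe_injective
    simpa [hwω] using hω
  have hcop : Nat.Coprime (p ^ n) (2 * k) := by
    refine Nat.Coprime.pow_left n ((Nat.Prime.coprime_iff_not_dvd hp).2 fun h ↦ ?_)
    have := Nat.le_of_dvd (by omega) h
    omega
  obtain ⟨I, hI⟩ := ideal_pow hcop (a := (k : 𝓞 K) + w) (p := p) (n := n)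
    (by linear_combination - hw)
  have ha0 : (k : 𝓞 K) + w ≠ 0 := by
    intro h
    have : (p : 𝓞 K) ^ n = 0 := by linear_combination (k - w) * h + hw
    exact hp.ne_zero (by exact_mod_cast (pow_eq_zero_iff (by omega)).1 this)
  have hI0 : I ∈ nonZeroDivisors (Ideal (𝓞 K)) := by
    rw [mem_nonZeroDivisors_iff_ne_zero]
    rintro rfl
    rw [zero_pow (by omega)] at hI
    exact ha0 (Ideal.span_singleton_eq_bot.1 hI)
  refine ⟨ClassGroup.mk0 ⟨I, hI0⟩, orderOf_eq_of_pow_and_pow_div_prime (by omega) ?_ ?_⟩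
  · rw [← map_pow, ClassGroup.mk0_eq_one_iff]
    exact ⟨⟨k + w, by simpa using hI.symm⟩⟩
  intro l hl hln h
  rw [← map_pow, ClassGroup.mk0_eq_one_iff] at h
  obtain ⟨⟨b, hb⟩⟩ := h
  have hb : I ^ (n / l) = Ideal.span {b} := by simpa using hb
  have hnl : n / l * l = n := Nat.div_mul_cancel hln
  have hass : Associated (b ^ l) (k + w) := by
    rw [← Ideal.span_singleton_eq_span_singleton, hI, ← Ideal.span_singleton_pow, ← hb,
      ← pow_mul, hnl]
  have hl2 : l ≠ 2 := by
    rintro rfl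
    exact (Nat.not_even_iff_odd.2 hodd) (even_iff_two_dvd.2 hln)
  have hl3 : l ≠ 3 := by rintro rfl; exact hn3 hln
  have hlodd : Odd l := hl.odd_of_ne_two hl2
  obtain ⟨u, hu⟩ := hass
  -- As `l` is prime to `12`, its square is `1` modulo `12`, so `u` is the `l`-th power of `u ^ l`.
  have hl12 : l * l % 12 = 1 := by
    have h2 : l % 2 = 1 := Nat.odd_iff.1 hlodd
    have h3 : l % 3 ≠ 0 := fun h ↦ hl3
      ((Nat.prime_dvd_prime_iff_eq Nat.prime_three hl).1 (Nat.dvd_of_mod_eq_zero h)).symm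
    have : l % 12 = 1 ∨ l % 12 = 5 ∨ l % 12 = 7 ∨ l % 12 = 11 := by omega
    rcases this with h | h | h | h <;> simp [Nat.mul_mod, h]
  have hul : u = (u ^ l) ^ l := by
    conv_lhs => rw [← pow_one u]
    rw [← pow_mul, ← Nat.div_add_mod (l * l) 12, hl12, pow_add, pow_mul,
      unit_pow_twelve hD0 hωD hK u]
    simp
  obtain ⟨c, hc⟩ : ∃ c : 𝓞 K, c ^ l = k + w := ⟨b * (u ^ l : (𝓞 K)ˣ), by
    rw [mul_pow, ← Units.val_pow_eq_pow_val (u ^ l), ← hul, hu]⟩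
  obtain ⟨φ⟩ : Nonempty (K →+* ℂ) := inferInstance
  obtain ⟨P, Q, hP, hQ⟩ := trace_norm_int hD0 hωD hK φ (RingOfIntegers.isIntegral_coe c)
  have hcw : φ c ^ l = k + φ ω := by
    rw [← map_pow, ← map_pow, hc]; simp [hwω]
  have hcj : conj (φ ω) = - φ ω := conj_sqrt hD0 (by rw [← map_pow, hωD]; simp)
  have hcw' : conj (φ c) ^ l = k - φ ω := by
    rw [← map_pow, hcw]; simp [hcj, sub_eq_add_neg]
  have hQl : Q ^ l = ((p : ℤ) ^ (n / l)) ^ l := by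
    rw [← pow_mul, hnl]
    have : (Q : ℂ) ^ l = (p : ℂ) ^ n := by
      rw [← hQ, mul_pow, hcw, hcw']
      have := congrArg φ hω
      simp at this
      linear_combination - this
    exact_mod_cast this
  have hQp : Q = (p : ℤ) ^ (n / l) :=
    (pow_left_inj₀ (norm_nonneg_of_eq hQ) (by positivity) hl.ne_zero).1 hQl
  have hQge : (p : ℤ) ≤ Q := by
    rw [hQp]
    refine le_self_pow₀ (by exact_mod_cast hp.one_lt.le) ?_
    exact (Nat.div_pos (Nat.le_of_dvd (by omega) hln) hl.pos).ne'
  refine powerSum_ne hP hQ (n := n) hk hlodd (by have := hl.two_le; omega)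
    (Nat.le_of_dvd (by omega) hln) (lt_of_lt_of_le (by exact_mod_cast hpk) hQge) ?_
  rw [hcw, hcw']; ring

end


/-- **Theorem (T2).** Let `n ≥ 5` be an odd integer not divisible by `3` and let `k` be a
positive integer. Then there are infinitely many odd primes `p` with `gcd(p,k) = 1` and
`k² < pⁿ` such that the class group of the imaginary quadratic field `ℚ(√(k² - pⁿ))`
contains an element of order `n`. -/
theorem infinitely_many_primes_class_group_order_n
    (n k : ℕ) (hn : 5 ≤ n) (hnodd : Odd n) (hn3 : ¬ (3 ∣ n)) (hk : 0 < k) :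
    {p : ℕ | p.Prime ∧ Odd p ∧ Nat.gcd p k = 1 ∧ k ^ 2 < p ^ n ∧
      ∀ (K : Type) [Field K] [NumberField K] (ω : K),
        ω ^ 2 = (k : K) ^ 2 - (p : K) ^ n → Module.finrank ℚ K = 2 →
        ∃ C : ClassGroup (NumberField.RingOfIntegers K), orderOf C = n}.Infinite := by
  rw [Set.infinite_iff_exists_gt]
  intro N
  obtain ⟨p, hNp, hp⟩ := Nat.exists_infinite_primes (N + 2 * k + n * (2 * k) ^ n + 1)
  have hkp : k < p := by omega
  have hlt : k ^ 2 < p ^ n :=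
    (Nat.pow_lt_pow_left hkp two_ne_zero).trans_le (Nat.pow_le_pow_right hp.pos (by omega))
  refine ⟨p, ⟨hp, hp.odd_of_ne_two (by omega), Nat.coprime_of_lt_prime hk.ne' hkp hp, hlt,
    fun K _ _ ω hω hK ↦ ?_⟩, by omega⟩
  exact exists_order hn hnodd hn3 hk hp (by omega) hlt ω hω hK
end

section
/- Let p be an odd prime and k, r positive integers such that 4k² = 3·pʳ + 1. Then k = 2, p = 5, and r = 1. -/
/-!
Factor `4k² - 1 = (2k - 1)(2k + 1) = 3pʳ`. The two factors differ by `2` and `p` is odd, so `p`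
divides at most one of them, and `pʳ` divides a single factor. The other factor then divides `3`,
which bounds `k` by `2`. The case `k = 1` would force `pʳ = 1`, and `k = 2` gives `pʳ = 5`.
-/

/-- If `p` is an odd prime and `k, r` are positive integers with `4k² = 3pʳ + 1`,
then `k = 2`, `p = 5` and `r = 1`. -/
theorem four_k_sq_eq_three_p_pow_add_one
    (p k r : ℕ) (hp : p.Prime) (hpodd : Odd p) (hk : 0 < k) (hr : 0 < r)
    (h : 4 * k ^ 2 = 3 * p ^ r + 1) :
    k = 2 ∧ p = 5 ∧ r = 1 := by
  -- With `k = m + 1` the factors `2m + 1` and `2m + 3` involve no truncated subtraction.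
  obtain ⟨m, rfl⟩ : ∃ m, k = m + 1 := ⟨k - 1, by omega⟩
  have hfac : (2 * m + 1) * (2 * m + 3) = 3 * p ^ r := by linarith
  have hpr : 1 < p ^ r := Nat.one_lt_pow hr.ne' hp.one_lt
  have hdvd : p ^ r ∣ (2 * m + 1) * (2 * m + 3) := ⟨3, by rw [hfac, mul_comm]⟩
  have hm : m ≤ 1 := by
    by_cases hpa : p ∣ 2 * m + 1
    · have hpb : ¬ p ∣ 2 * m + 3 := fun hpb => by
        have h2 : p ∣ 2 := by simpa using Nat.dvd_sub hpb hpa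
        rw [Nat.prime_dvd_prime_iff_eq hp Nat.prime_two] at h2
        subst h2
        exact absurd hpodd (by decide)
      obtain ⟨c, hc⟩ := hp.prime.pow_dvd_of_dvd_mul_right r hpb hdvd
      have h3 : c * (2 * m + 3) = 3 := by
        apply Nat.eq_of_mul_eq_mul_left (by omega : 0 < p ^ r)
        rw [← mul_assoc, ← hc, hfac, mul_comm]
      have := Nat.le_of_dvd (by norm_num) (Dvd.intro_left c h3)
      omega
    · obtain ⟨c, hc⟩ := hp.prime.pow_dvd_of_dvd_mul_left r hpa hdvd
      have h3 : (2 * m + 1) * c = 3 := by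
        apply Nat.eq_of_mul_eq_mul_left (by omega : 0 < p ^ r)
        rw [mul_left_comm, ← hc, hfac, mul_comm]
      have := Nat.le_of_dvd (by norm_num) (Dvd.intro c h3)
      omega
  interval_cases m
  · omega
  · have h5 : p ^ r = 5 := by omega
    obtain ⟨rfl, rfl⟩ := (Nat.Prime.pow_eq_iff Nat.prime_five).1 h5
    exact ⟨rfl, rfl, rfl⟩
end

section
/- Let d > 3 be a squarefree positive integer, K = ℚ(√−d), p an odd prime, n a positive integer, and k, m positive integers with p ∤ k and k² + m²·d = pⁿ. Then there exists an ideal 𝔞 of the ring of integers O_K of K such that 𝔞ⁿ is the principal ideal generated by α = k + m·√−d. -/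
/-! With `β = 2k - α` the conjugate of `α`, one has `α * β = k² + m²d = pⁿ` and `α + β = 2k`.
Since `p` is odd and prime to `k`, the integers `2k` and `pⁿ` are coprime, hence so are `α` and `β`.
Unique factorization of ideals in the Dedekind domain `𝓞 K` shows that each of the coprime factors
`(α)`, `(β)` of the `n`-th power `(p)ⁿ` is itself an `n`-th power. -/

/-- Let `d > 3` be squarefree, `K = ℚ(√-d)`, `p` an odd prime, `n ≥ 1`, and `k, m`
positive integers with `p ∤ k` and `k² + m²·d = pⁿ`. Then there is an ideal `𝔞` of the
ring of integers `O_K` with `𝔞ⁿ = (α)`, where `α = k + m·√-d`. -/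
theorem exists_ideal_pow_eq_span_alpha
    (d : ℕ) (hd : 3 < d) (hdsf : Squarefree d)
    (K : Type) [Field K] [NumberField K]
    (ω : K) (hω : ω ^ 2 = -(d : K))
    (hdeg : Module.finrank ℚ K = 2)
    (p : ℕ) (hp : p.Prime) (hpodd : Odd p)
    (n : ℕ) (hn : 0 < n)
    (k m : ℕ) (hk : 0 < k) (hm : 0 < m) (hpk : ¬ (p ∣ k))
    (heq : k ^ 2 + m ^ 2 * d = p ^ n)
    (α : NumberField.RingOfIntegers K)
    (hα : (α : K) = (k : K) + (m : K) * ω) :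
    ∃ 𝔞 : Ideal (NumberField.RingOfIntegers K), 𝔞 ^ n = Ideal.span {α} := by
  obtain ⟨β, hβ⟩ : ∃ β : NumberField.RingOfIntegers K, β = 2 * k - α := ⟨_, rfl⟩
  have hprod : α * β = (p : NumberField.RingOfIntegers K) ^ n := by
    apply NumberField.RingOfIntegers.ext
    have h : (k : K) ^ 2 + (m : K) ^ 2 * d = (p : K) ^ n := by exact_mod_cast heq
    rw [hβ]
    simp only [map_mul, map_sub, map_pow, map_natCast, map_ofNat, hα]
    linear_combination h - (m : K) ^ 2 * hω
  have hcop : Nat.Coprime (2 * k) (p ^ n) :=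
    (Nat.Coprime.mul_left (Nat.coprime_two_left.mpr hpodd)
      ((hp.coprime_iff_not_dvd.mpr hpk).symm)).pow_right n
  have hab : IsCoprime α β := by
    have h : IsCoprime ((2 * k : ℕ) : NumberField.RingOfIntegers K) ((p ^ n : ℕ) : _) :=
      hcop.cast
    obtain ⟨u, v, huv⟩ := h
    push_cast at huv
    -- `1 = u * 2k + v * pⁿ = u * (α + β) + v * α * β`
    refine ⟨u + v * β, u, ?_⟩
    rw [← huv, ← hprod, hβ]
    ring
  have hI : IsCoprime (Ideal.span {α}) (Ideal.span {β}) :=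
    (Ideal.isCoprime_span_singleton_iff α β).mpr hab
  have hmul : Ideal.span {α} * Ideal.span {β}
      = Ideal.span {(p : NumberField.RingOfIntegers K)} ^ n := by
    rw [Ideal.span_singleton_mul_span_singleton, Ideal.span_singleton_pow, hprod]
  obtain ⟨𝔞, h𝔞⟩ := exists_eq_pow_of_mul_eq_pow_of_coprime hI hmul
  exact ⟨𝔞, h𝔞.symm⟩
end

section
/- Let d > 3 be a squarefree positive integer, K = ℚ(√−d), n an odd positive integer, α a nonzero element of the ring of integers O_K of K, and 𝔞 an ideal of O_K with 𝔞ⁿ = (α). If the order of the class of 𝔞 in the ideal class group of K is strictly less than n, then there exist a prime q dividing n and an element β ∈ O_K with β^q = α. -/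
/-!
The order `r` of the class of `𝔞` divides `n`, because `𝔞 ^ n` is principal, and `r < n`; hence
some prime `q` divides `n / r`, and `𝔞 ^ (n / q)` is already principal, say `(γ)`. Then
`(γ ^ q) = (α)`, so `α = γ ^ q * u` for a unit `u`. As `q` is odd and every unit squares to `1`
(`unit_sq_eq_one`), `u = u ^ q` and `α = (γ * u) ^ q`.

For the units, write `u = a + b ω` with `a b : ℚ`. The trace `t = 2 a` is an integer and the norm
`a ^ 2 + d b ^ 2` is `1`, so `d (2 b) ^ 2 = 4 - t ^ 2` is an integer. Since `d` is squarefree,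
`c = 2 b` is an integer (`exists_int_of_squarefree_mul_sq`), and `t ^ 2 + d c ^ 2 = 4` with
squarefree `d > 3` leaves only `c = 0`, `t = ± 2`.
-/

/-- Squarefreeness enters through the denominator `s` of `c`: clearing denominators gives
`s ^ 2 ∣ d`, so `s = 1`. -/
lemma exists_int_of_squarefree_mul_sq {d : ℕ} (hd : Squarefree d) {c : ℚ} {k : ℤ}
    (h : (d : ℚ) * c ^ 2 = k) : ∃ m : ℤ, c = m := by
  have h1 : (d : ℤ) * c.num ^ 2 = k * (c.den : ℤ) ^ 2 := by
    have : (d : ℚ) * c.num ^ 2 = k * (c.den : ℚ) ^ 2 := by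
      rw [← h]
      have hnum : c * c.den = c.num := Rat.mul_den_eq_num c
      rw [← hnum]
      ring
    exact_mod_cast this
  have hcop : IsCoprime ((c.den : ℤ) ^ 2) (c.num ^ 2) := by
    have : IsCoprime c.num (c.den : ℤ) := Int.isCoprime_iff_nat_coprime.2 (by
      simpa using c.reduced)
    exact this.symm.pow
  have hdvd : (c.den : ℤ) ^ 2 ∣ (d : ℤ) :=
    hcop.dvd_of_dvd_mul_right ⟨k, by rw [h1]; ring⟩
  have hdvd' : c.den * c.den ∣ d := by
    rw [← pow_two]; exact_mod_cast hdvd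
  have hone : c.den = 1 := Nat.isUnit_iff.1 (hd _ hdvd')
  exact ⟨c.num, (Rat.coe_int_num_of_den_eq_one hone).symm⟩

/-- The trace and the norm of an element of `ℚ(√-d)`, read off from the matrix of multiplication in
the basis `1, ω`. -/
lemma exists_trace_norm {d : ℕ} (hd : 0 < d) {K : Type} [Field K] [NumberField K]
    {ω : K} (hω : ω ^ 2 = -(d : K)) (hdeg : Module.finrank ℚ K = 2) (x : K) :
    ∃ a b : ℚ, x = a + b * ω ∧ Algebra.trace ℚ K x = 2 * a ∧
      Algebra.norm ℚ x = a ^ 2 + d * b ^ 2 := by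
  have hli : LinearIndependent ℚ ![(1 : K), ω] := by
    rw [LinearIndependent.pair_iff' one_ne_zero]
    intro a ha
    have h1 : ((a ^ 2 : ℚ) : K) = ((-(d : ℚ) : ℚ) : K) := by
      push_cast
      rw [← hω, ← ha, Algebra.smul_def]
      simp
    have h2 : a ^ 2 = -(d : ℚ) := by exact_mod_cast h1
    have h3 : (0 : ℚ) < d := by exact_mod_cast hd
    nlinarith [sq_nonneg a]
  let B := basisOfLinearIndependentOfCardEqFinrank hli (by simp [hdeg])
  have hB0 : B 0 = 1 := by simp [B]
  have hB1 : B 1 = ω := by simp [B]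
  obtain ⟨a, ha⟩ : ∃ a, a = B.repr x 0 := ⟨_, rfl⟩
  obtain ⟨b, hb⟩ : ∃ b, b = B.repr x 1 := ⟨_, rfl⟩
  have hx : x = a • B 0 + b • B 1 := by
    have := B.sum_repr x
    rw [Fin.sum_univ_two, ← ha, ← hb] at this
    exact this.symm
  have hx0 : x * B 0 = a • B 0 + b • B 1 := by rw [← hx, hB0, mul_one]
  have hx1 : x * B 1 = (-(d * b)) • B 0 + a • B 1 := by
    rw [hx, hB0, hB1]
    simp only [Algebra.smul_def, map_neg, map_mul, map_natCast]
    linear_combination (algebraMap ℚ K b) * hω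
  have hM : Algebra.leftMulMatrix B x = !![a, -(d * b); b, a] := by
    ext i j
    rw [Algebra.leftMulMatrix_eq_repr_mul]
    fin_cases j
    · change B.repr (x * B 0) i = _
      rw [hx0]
      fin_cases i <;> simp
    · change B.repr (x * B 1) i = _
      rw [hx1]
      fin_cases i <;> simp
  refine ⟨a, b, ?_, ?_, ?_⟩
  · rw [hx, hB0, hB1]; simp [Algebra.smul_def]
  · rw [Algebra.trace_eq_matrix_trace B, hM, Matrix.trace_fin_two_of]; ring
  · rw [Algebra.norm_eq_matrix_det B, hM, Matrix.det_fin_two_of]; ring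

/-- The units of the ring of integers of `ℚ(√-d)` are `±1` when `d > 3` is squarefree; this form
is all that is needed for them to be `q`-th powers for odd `q`. -/
lemma unit_sq_eq_one {d : ℕ} (hd : 3 < d) (hdsf : Squarefree d)
    {K : Type} [Field K] [NumberField K]
    {ω : K} (hω : ω ^ 2 = -(d : K)) (hdeg : Module.finrank ℚ K = 2)
    (u : (NumberField.RingOfIntegers K)ˣ) : u ^ 2 = 1 := by
  obtain ⟨a, b, hx, htr, hnorm⟩ :=
    exists_trace_norm (by omega) hω hdeg ((u : NumberField.RingOfIntegers K) : K)
  have hN : a ^ 2 + d * b ^ 2 = 1 := by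
    have h := NumberField.isUnit_iff_norm.1 u.isUnit
    rw [RingOfIntegers.coe_norm, hnorm, abs_of_nonneg (by positivity)] at h
    exact h
  obtain ⟨t, ht⟩ : ∃ t : ℤ, 2 * a = t := by
    have h : IsIntegral ℤ (Algebra.trace ℚ K ((u : NumberField.RingOfIntegers K) : K)) :=
      Algebra.isIntegral_trace (NumberField.RingOfIntegers.isIntegral_coe _)
    obtain ⟨t, ht⟩ := IsIntegrallyClosed.isIntegral_iff.1 h
    exact ⟨t, by rw [← htr, ← ht]; simp⟩
  obtain ⟨c, hc⟩ := exists_int_of_squarefree_mul_sq hdsf (c := 2 * b) (k := 4 - t ^ 2) (by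
    push_cast
    rw [← ht]
    linear_combination 4 * hN)
  have hZ : t ^ 2 + d * c ^ 2 = 4 := by
    have : (t : ℚ) ^ 2 + d * (c : ℚ) ^ 2 = 4 := by
      rw [← ht, ← hc]
      linear_combination 4 * hN
    exact_mod_cast this
  -- A nonzero `c` would force `d = 4`, which is not squarefree.
  have hc0 : c = 0 := by
    by_contra hne
    have hc1 : 1 ≤ c ^ 2 := by have := sq_pos_of_ne_zero hne; omega
    have hd' : (4 : ℤ) ≤ d := by exact_mod_cast hd
    have hd4 : (d : ℤ) = 4 := by nlinarith [sq_nonneg t]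
    have hd4' : d = 4 := by exact_mod_cast hd4
    subst hd4'
    have := Nat.isUnit_iff.1 (hdsf 2 (by norm_num))
    omega
  have hb : b = 0 := by
    rw [hc0] at hc
    simpa using hc
  subst hb
  have ha : a ^ 2 = 1 := by simpa using hN
  refine Units.ext (NumberField.RingOfIntegers.ext ?_)
  change ((u : NumberField.RingOfIntegers K) : K) ^ 2 = 1
  rw [hx]
  have : ((a ^ 2 : ℚ) : K) = 1 := by rw [ha]; simp
  simpa using this

theorem class_order_lt_imp_qth_power
    (d : ℕ) (hd : 3 < d) (hdsf : Squarefree d)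
    (K : Type) [Field K] [NumberField K]
    (ω : K) (hω : ω ^ 2 = -(d : K))
    (hdeg : Module.finrank ℚ K = 2)
    (n : ℕ) (hn : 0 < n) (hnodd : Odd n)
    (α : NumberField.RingOfIntegers K) (hα : α ≠ 0)
    (𝔞 : Ideal (NumberField.RingOfIntegers K))
    (h𝔞 : 𝔞 ∈ nonZeroDivisors (Ideal (NumberField.RingOfIntegers K)))
    (heq : 𝔞 ^ n = Ideal.span {α})
    (hord : orderOf (ClassGroup.mk0 ⟨𝔞, h𝔞⟩) < n) :
    ∃ q : ℕ, q.Prime ∧ q ∣ n ∧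
      ∃ β : NumberField.RingOfIntegers K, β ^ q = α := by
  have hprin (k : ℕ) : ClassGroup.mk0 ⟨𝔞, h𝔞⟩ ^ k = 1 ↔ (𝔞 ^ k).IsPrincipal := by
    rw [← map_pow, ClassGroup.mk0_eq_one_iff]
    simp
  obtain ⟨m, hm⟩ : orderOf (ClassGroup.mk0 ⟨𝔞, h𝔞⟩) ∣ n :=
    orderOf_dvd_of_pow_eq_one ((hprin n).2 ⟨α, heq⟩)
  have hm1 : m ≠ 1 := by
    rintro rfl
    omega
  obtain ⟨q, hq, k, rfl⟩ := Nat.exists_prime_and_dvd hm1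
  have hn' : n = orderOf (ClassGroup.mk0 ⟨𝔞, h𝔞⟩) * k * q := by rw [hm]; ring
  obtain ⟨γ, hγ⟩ := (hprin (orderOf (ClassGroup.mk0 ⟨𝔞, h𝔞⟩) * k)).1 (by
    rw [pow_mul, pow_orderOf_eq_one, one_pow])
  have hqn : q ∣ n := ⟨_, hn'.trans (mul_comm _ _)⟩
  have hspan : Ideal.span {γ ^ q} = Ideal.span {α} := by
    rw [← heq, hn', pow_mul, hγ, ← Ideal.span_singleton_pow]
  obtain ⟨u, hu⟩ := Ideal.span_singleton_eq_span_singleton.1 hspan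
  obtain ⟨j, hj⟩ := hnodd.of_dvd_nat hqn
  have huq : u ^ q = u := by
    rw [hj, pow_succ, pow_mul, unit_sq_eq_one hd hdsf hω hdeg u, one_pow, one_mul]
  refine ⟨q, hq, hqn, γ * u, ?_⟩
  rw [mul_pow, ← Units.val_pow_eq_pow_val, huq, hu]
end

section
/- Let n ≥ 5 be an odd integer not divisible by 3, and let d and k be fixed positive integers. Then the set of primes p for which there exists a positive integer m with d·m² + k² = pⁿ is finite. -/
/-!
Let `A = k + m√-d`, so that `A + conj A = 2k` and `|A|² = pⁿ`. If the prime `p` does not divide `k`,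
then `√-d ↦ -k/m` defines a ring homomorphism `ℤ[√-d] → ℤ/pⁿ` with kernel `(A)`. Thue's pigeonhole
lemma produces a short `γ ≠ 0` that is mapped to a multiple of `p`, so `γⁿ = A β` with
`N(β) ≤ (1 + d)ⁿ` (`exists_pow_eq_mul`; no class group is needed). Only finitely many `β` occur, so `β` may be fixed.
Then `γⁿ / conj γⁿ = (A / conj A) (β / conj β)`. As `A + conj A = 2k` is bounded, the number
`-A / conj A = exp (φ i)` is within `O(1/|A|)` of `1`, so that
`γ / conj γ = θ exp (φ i / n)` with `θⁿ = -β / conj β`; the `n`-th root `θ` takes finitely many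
values and may be fixed as well.

Two solutions `(A, γ)` and `(B, η)` with the same `β` and `θ` are played against each other by Thue's
method. The hypergeometric Padé approximants `P_r(y) - y^(1/n) Q_r(y) = O((y - 1)^(2r+1))` are
evaluated at `y = -A / conj A`. After multiplication by `n^(2r) (conj A)^r` both become elements of
`ℤ[√-d]` (`homogenized_mem`), and `P_r(y) conj γ η - Q_r(y) γ conj η`, multiplied by that factor, is
an element of `ℤ[√-d]` of absolute value `< 1` as soon as `|B|` is large compared with `|γ η| |A|^r`
and `|A|^r` is large compared with `|γ η|`; hence it vanishes (`form_eq_zero`). If `|A|` is large and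
`|B|` very large, this can be arranged for two consecutive values of `r`: one needs roughly
`|η|³ < |B|`, and `|B|` is of order `|η|ⁿ` with `n ≥ 5`. But the determinant
`P_r Q_(r+1) - P_(r+1) Q_r` equals `c (y - 1)^(2r+1)` with `c ≠ 0` (`padeDet_eval_ne_zero`), a
contradiction. So one large solution bounds all the others (`gap_principle`), and for each pair
`(β, θ)` only finitely many `p` remain.
-/

/-! ### Coefficients of the Padé approximants -/

open Finset Polynomial

/-- The generalized binomial coefficient `x (x - 1) ⋯ (x - j + 1) / j!` for real `x`. -/
noncomputable def bin (x : ℝ) (j : ℕ) : ℝ := (∏ i ∈ range j, (x - i)) / (j.factorial : ℝ)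

/-- The coefficient `C(r - ν, r - j) C(r + ν, j)` of `y ^ j` in the numerator of the `[r/r]` Padé
approximant to `y ^ ν` at `y = 1`. Replacing `ν` by `-ν` gives the denominator. -/
noncomputable def padeCoeff (ν : ℝ) (r j : ℕ) : ℝ := bin (r - ν) (r - j) * bin (r + ν) j

/-- The numerator of the `[r/r]` Padé approximant to `y ^ ν` at `y = 1`; the denominator is
`padePoly (-ν) r`. -/
noncomputable def padePoly (ν : ℝ) (r : ℕ) : ℂ[X] :=
  ∑ j ∈ range (r + 1), C (padeCoeff ν r j : ℂ) * X ^ j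

lemma padeCoeff_neg {ν : ℝ} {r j : ℕ} (hj : j ≤ r) :
    padeCoeff (-ν) r j = padeCoeff ν r (r - j) := by
  unfold padeCoeff
  rw [Nat.sub_sub_self hj, sub_neg_eq_add, ← sub_eq_add_neg, mul_comm]

/-- The primes dividing `n` are handled by the crude bound `v_p(j!) ≤ j`; for the others `n` is
invertible modulo `p ^ e`, which turns the arithmetic progression into consecutive integers. -/
lemma factorial_dvd_pow_mul_prod (n : ℕ) (a : ℤ) (j : ℕ) :
    (j.factorial : ℤ) ∣ n ^ j * ∏ i ∈ range j, (a - n * i) := by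
  rw [Int.natCast_dvd, Nat.dvd_iff_prime_pow_dvd_dvd]
  intro p e hp he
  rw [← Int.natCast_dvd]
  by_cases hpn : p ∣ n
  · have : e ≤ j := by
      have := Fact.mk hp
      have h1 : e ≤ padicValNat p j.factorial :=
        (padicValNat_dvd_iff_le (Nat.factorial_ne_zero j)).1 he
      have h2 := sub_one_mul_padicValNat_factorial (p := p) j
      have h3 : 1 ≤ p - 1 := by have := hp.two_le; omega
      calc e ≤ 1 * padicValNat p j.factorial := by omega
        _ ≤ (p - 1) * padicValNat p j.factorial := Nat.mul_le_mul_right _ h3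
        _ ≤ j := by omega
    apply Dvd.dvd.mul_right
    exact_mod_cast (pow_dvd_pow_of_dvd hpn e).trans (pow_dvd_pow n this)
  · have hcop : IsCoprime (n : ℤ) ((p ^ e : ℕ) : ℤ) := by
      rw [Nat.isCoprime_iff_coprime]
      exact Nat.Coprime.pow_right _ ((Nat.Prime.coprime_iff_not_dvd hp).2 hpn).symm
    obtain ⟨u, v, huv⟩ := hcop
    -- `u` is an inverse of `n` modulo `p ^ e`, and `a ≡ n * (u * a)`.
    have hmod : ∏ i ∈ range j, (a - n * i) ≡ ∏ i ∈ range j, ((n : ℤ) * (u * a - i))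
        [ZMOD (p ^ e : ℕ)] := by
      refine Int.ModEq.prod fun i _ => ?_
      apply Int.ModEq.symm
      rw [Int.modEq_iff_dvd]
      exact ⟨v * a, by linear_combination (-a) * huv⟩
    have hdiv : ((p ^ e : ℕ) : ℤ) ∣ ∏ i ∈ range j, ((n : ℤ) * (u * a - i)) := by
      rw [prod_mul_distrib]
      apply Dvd.dvd.mul_left
      refine (Int.natCast_dvd_natCast.2 he).trans ?_
      have h := Nat.factorial_coe_dvd_prod j (u * a - (j - 1))
      rw [← prod_range_reflect (M := ℤ)] at h
      refine h.trans (dvd_of_eq (prod_congr rfl fun i hi => ?_))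
      have : i + 1 ≤ j := by simpa using hi
      have e1 : ((j - 1 - i : ℕ) : ℤ) = j - 1 - i := by omega
      rw [e1]; ring
    exact Dvd.dvd.mul_left (hmod.dvd_iff.2 hdiv) _

lemma bin_integral (n : ℕ) (hn : 0 < n) (a : ℤ) (j : ℕ) :
    ∃ z : ℤ, (n : ℝ) ^ (2 * j) * bin (a / n) j = z := by
  obtain ⟨z, hz⟩ := factorial_dvd_pow_mul_prod n a j
  refine ⟨z, ?_⟩
  have hn' : (n : ℝ) ≠ 0 := by positivity
  have hz' : (n : ℝ) ^ j * ∏ i ∈ range j, ((a : ℝ) - n * i) = j.factorial * z := by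
    exact_mod_cast hz
  have h2 : (n : ℝ) ^ j * ∏ i ∈ range j, ((a : ℝ) / n - i) = ∏ i ∈ range j, ((a : ℝ) - n * i) := by
    rw [pow_eq_prod_const, ← prod_mul_distrib]
    refine prod_congr rfl fun i _ => by field_simp
  unfold bin
  have hf : (j.factorial : ℝ) ≠ 0 := by positivity
  rw [two_mul, pow_add, mul_div_assoc', div_eq_iff hf, mul_assoc, h2, hz']
  ring

/-- `n ^ (2 r)` is a common denominator of the coefficients of `padePoly (1 / n) r`. -/
lemma padeCoeff_integral (n : ℕ) (hn : 0 < n) {r j : ℕ} (hj : j ≤ r) :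
    ∃ z : ℤ, (n : ℝ) ^ (2 * r) * padeCoeff (1 / n) r j = z := by
  obtain ⟨z₁, h₁⟩ := bin_integral n hn (r * n - 1) (r - j)
  obtain ⟨z₂, h₂⟩ := bin_integral n hn (r * n + 1) j
  refine ⟨z₁ * z₂, ?_⟩
  have hn' : (n : ℝ) ≠ 0 := by positivity
  push_cast at h₁ h₂ ⊢
  rw [← h₁, ← h₂]
  have e1 : ((r : ℝ) * n - 1) / n = r - 1 / n := by field_simp
  have e2 : ((r : ℝ) * n + 1) / n = r + 1 / n := by field_simp
  have e3 : 2 * r = 2 * (r - j) + 2 * j := by omega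
  rw [e1, e2, e3, pow_add, padeCoeff]
  ring

lemma abs_bin_le {ν : ℝ} (hν : |ν| ≤ 1) {r j : ℕ} (hj : j ≤ r) :
    |bin (r + ν) j| ≤ (r + 1).choose j := by
  have h1 : ((r + 1).choose j : ℝ) = (∏ i ∈ range j, ((r : ℝ) + 1 - i)) / (j.factorial : ℝ) := by
    rw [eq_div_iff (by positivity), mul_comm]
    have := Nat.descFactorial_eq_factorial_mul_choose (r + 1) j
    rw [Nat.descFactorial_eq_prod_range] at this
    have h : ((∏ i ∈ range j, (r + 1 - i) : ℕ) : ℝ) = j.factorial * (r + 1).choose j := by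
      exact_mod_cast this
    rw [← h]
    push_cast
    refine prod_congr rfl fun i hi => ?_
    have : i ≤ r + 1 := by have := mem_range.1 hi; omega
    push_cast [Nat.cast_sub this]; ring
  rw [h1, bin, abs_div, abs_prod, abs_of_pos (show (0 : ℝ) < j.factorial by positivity)]
  gcongr with i hi
  have : i ≤ r := by have := mem_range.1 hi; omega
  have : (i : ℝ) ≤ r := by exact_mod_cast this
  rw [abs_le] at hν ⊢
  constructor <;> linarith

lemma sum_abs_padeCoeff_le {ν : ℝ} (hν : |ν| ≤ 1) (r : ℕ) :
    ∑ j ∈ range (r + 1), |padeCoeff ν r j| ≤ 4 ^ (r + 1) := by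
  have h : ∀ j ∈ range (r + 1), |padeCoeff ν r j| ≤ 2 ^ (r + 1) * (r + 1).choose j := by
    intro j hj
    have hj' : j ≤ r := by have := mem_range.1 hj; omega
    rw [padeCoeff, abs_mul]
    gcongr
    · rw [sub_eq_add_neg]
      refine (abs_bin_le (by rwa [abs_neg]) (Nat.sub_le r j)).trans ?_
      exact_mod_cast Nat.choose_le_two_pow _ _
    · exact abs_bin_le hν hj'
  calc _ ≤ ∑ j ∈ range (r + 1), (2 : ℝ) ^ (r + 1) * (r + 1).choose j := sum_le_sum h
    _ ≤ ∑ j ∈ range (r + 1 + 1), (2 : ℝ) ^ (r + 1) * (r + 1).choose j := by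
      rw [sum_range_succ _ (r + 1)]; linarith [show (0:ℝ) ≤ 2 ^ (r + 1) * (r + 1).choose (r + 1) by positivity]
    _ = 4 ^ (r + 1) := by
      rw [← mul_sum]
      have := Nat.sum_range_choose (r + 1)
      have h : ∑ j ∈ range (r + 1 + 1), ((r + 1).choose j : ℝ) = 2 ^ (r + 1) := by
        exact_mod_cast this
      rw [h, ← mul_pow]; norm_num

/-! ### Order of contact at `1` -/

lemma prod_erase_range (r j : ℕ) (hj : j ≤ r) :
    ∏ i ∈ (range (r + 1)).erase j, ((j : ℝ) - i) =
      (-1) ^ (r - j) * j.factorial * (r - j).factorial := by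
  obtain ⟨t, rfl⟩ := Nat.exists_eq_add_of_le hj
  have h0 : (range (j + t + 1)).erase j = range j ∪ (range t).map (addLeftEmbedding (j + 1)) := by
    ext i
    simp only [mem_erase, mem_range, mem_union, mem_map, addLeftEmbedding_apply]
    constructor
    · rintro ⟨h1, h2⟩
      by_cases h : i < j
      · exact Or.inl h
      · exact Or.inr ⟨i - (j + 1), by omega, by omega⟩
    · rintro (h | ⟨a, ha, rfl⟩) <;> omega
  have hd : Disjoint (range j) ((range t).map (addLeftEmbedding (j + 1))) := by
    rw [disjoint_left]
    intro i hi
    simp only [mem_range, mem_map, addLeftEmbedding_apply, not_exists, not_and] at hi ⊢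
    omega
  rw [h0, prod_union hd, prod_map]
  have h1 : ∏ i ∈ range j, ((j : ℝ) - i) = j.factorial := by
    rw [← prod_range_reflect, ← prod_range_add_one_eq_factorial]
    push_cast
    refine prod_congr rfl fun i hi => ?_
    have : i + 1 ≤ j := by simpa using hi
    have e1 : ((j - 1 - i : ℕ) : ℝ) = j - 1 - i := by
      rw [Nat.sub_sub, Nat.cast_sub (by omega)]; push_cast; ring
    rw [e1]; ring
  have h2 : ∏ i ∈ range t, ((j : ℝ) - (addLeftEmbedding (j + 1) i : ℕ)) =
      (-1) ^ t * t.factorial := by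
    rw [← prod_range_add_one_eq_factorial, pow_eq_prod_const]
    push_cast
    rw [← prod_mul_distrib]
    refine prod_congr rfl fun i hi => ?_
    simp only [addLeftEmbedding_apply]
    push_cast; ring
  rw [h1, h2, Nat.add_sub_cancel_left]
  ring

/-- The factor by which the Padé coefficients differ from the divided-difference weights on the nodes
`0, …, r, ν, …, r + ν`, see `padeCoeff_mul_prod`. -/
noncomputable def padeConst (ν : ℝ) (r : ℕ) : ℝ :=
  (∏ i ∈ range (r + 1), ((i : ℝ) - ν)) * ∏ i ∈ range r, ((i : ℝ) + 1 + ν)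

lemma padeConst_neg (ν : ℝ) (r : ℕ) : padeConst (-ν) r = - padeConst ν r := by
  unfold padeConst
  rw [prod_range_succ', prod_range_succ' (fun i : ℕ => (i : ℝ) - ν)]
  push_cast
  simp only [sub_neg_eq_add, ← sub_eq_add_neg]
  ring

/-- Up to the common factor `padeConst ν r`, the coefficient `padeCoeff ν r j` is the weight of the
node `j` in the divided difference over the `2 r + 2` nodes `0, …, r, ν, …, r + ν`. -/
lemma padeCoeff_mul_prod (ν : ℝ) {r j : ℕ} (hj : j ≤ r) :
    padeCoeff ν r j * ((∏ i ∈ (range (r + 1)).erase j, ((j : ℝ) - i)) *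
      ∏ i ∈ range (r + 1), ((j : ℝ) - (i + ν))) = padeConst ν r := by
  rw [prod_erase_range r j hj]
  obtain ⟨t, rfl⟩ := Nat.exists_eq_add_of_le hj
  have hs : j + t + 1 = (j + 1) + t := by ring
  have h1 : ∏ i ∈ range (j + t + 1), ((j : ℝ) - (i + ν)) =
      (∏ i ∈ range (j + 1), ((i : ℝ) - ν)) * ((-1) ^ t * ∏ i ∈ range t, ((i : ℝ) + 1 + ν)) := by
    rw [hs, prod_range_add, ← prod_range_reflect]
    congr 1
    · refine prod_congr rfl fun i hi => ?_
      have : i ≤ j := by have := mem_range.1 hi; omega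
      have e1 : ((j + 1 - 1 - i : ℕ) : ℝ) = j - i := by
        rw [Nat.add_sub_cancel, Nat.cast_sub this]
      rw [e1]; ring
    · rw [pow_eq_prod_const, ← prod_mul_distrib]
      refine prod_congr rfl fun i hi => ?_
      push_cast; ring
  have h2 : padeConst ν (j + t) = (∏ i ∈ range (j + 1), ((i : ℝ) - ν)) *
      (∏ i ∈ range t, ((j + t : ℕ) - ν - (i : ℝ))) * ((∏ i ∈ range t, ((i : ℝ) + 1 + ν)) *
      ∏ i ∈ range j, ((j + t : ℕ) + ν - (i : ℝ))) := by
    unfold padeConst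
    rw [hs, prod_range_add, add_comm j t, prod_range_add (fun i : ℕ => (i : ℝ) + 1 + ν)]
    congr 2
    · rw [← prod_range_reflect]
      refine prod_congr rfl fun i hi => ?_
      have : i + 1 ≤ t := by simpa using hi
      have e1 : ((t - 1 - i : ℕ) : ℝ) = t - 1 - i := by
        rw [Nat.sub_sub, Nat.cast_sub (by omega)]; push_cast; ring
      push_cast
      rw [e1]; ring
    · rw [← prod_range_reflect]
      refine prod_congr rfl fun i hi => ?_
      have : i + 1 ≤ j := by simpa using hi
      have e1 : ((j - 1 - i : ℕ) : ℝ) = j - 1 - i := by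
        rw [Nat.sub_sub, Nat.cast_sub (by omega)]; push_cast; ring
      push_cast
      rw [e1]; ring
  rw [h1, h2, padeCoeff, bin, bin, Nat.add_sub_cancel_left]
  have f1 : (j.factorial : ℝ) ≠ 0 := by positivity
  have f2 : (t.factorial : ℝ) ≠ 0 := by positivity
  have f3 : ((-1 : ℝ) ^ t) * (-1) ^ t = 1 := by rw [← mul_pow]; norm_num
  field_simp
  linear_combination ((∏ i ∈ range (j + 1), ((i : ℝ) - ν)) *
      (∏ i ∈ range t, ((j + t : ℕ) - ν - (i : ℝ))) * ((∏ i ∈ range t, ((i : ℝ) + 1 + ν)) *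
      ∏ i ∈ range j, ((j + t : ℕ) + ν - (i : ℝ)))) * f3

/-- The Taylor coefficients of `P(e ^ t) - e ^ (ν t) Q(e ^ t)` of order at most `2 r` vanish: up to a
factor, the difference of the two sides is the divided difference of `X ^ N` over `2 r + 2` nodes. -/
lemma pade_moments {ν : ℝ} (h0 : 0 < ν) (h1 : ν < 1) {r N : ℕ} (hN : N ≤ 2 * r) :
    ∑ j ∈ range (r + 1), padeCoeff ν r j * (j : ℝ) ^ N =
      ∑ j ∈ range (r + 1), padeCoeff (-ν) r j * ((j : ℝ) + ν) ^ N := by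
  set v : ℕ ⊕ ℕ → ℝ := Sum.elim (fun j => (j : ℝ)) (fun j => (j : ℝ) + ν) with hv
  set s := (range (r + 1)).disjSum (range (r + 1)) with hs
  have key : ∀ a b : ℕ, (a : ℝ) ≠ b + ν := by
    intro a b hab
    have h2 : (b : ℝ) < a := by linarith
    have h3 : (a : ℝ) < b + 1 := by linarith
    have h2' : b < a := by exact_mod_cast h2
    have h3' : a < b + 1 := by exact_mod_cast h3
    omega
  have hinj : Set.InjOn v s := by
    rintro (a | a) _ (b | b) _ h <;> simp only [hv, Sum.elim_inl, Sum.elim_inr] at h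
    · simpa using h
    · exact absurd h (key a b)
    · exact absurd h.symm (key b a)
    · simpa using h
  have hcard : #s = 2 * r + 2 := by rw [hs, card_disjSum]; simp; ring
  have hdeg : ((X : ℝ[X]) ^ N).degree < (#s : ℕ) := by
    rw [degree_X_pow, hcard]; exact_mod_cast (by omega : N < 2 * r + 2)
  have hL := Lagrange.coeff_eq_sum hinj hdeg
  rw [coeff_X_pow, if_neg (by omega)] at hL
  have hK : padeConst ν r ≠ 0 := by
    refine mul_ne_zero (prod_ne_zero_iff.2 fun i _ h => key i 0 ?_)
      (prod_ne_zero_iff.2 fun i _ => by positivity)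
    push_cast; linarith
  have hl : ∀ j ∈ range (r + 1), eval (v (.inl j)) ((X : ℝ[X]) ^ N) /
      ∏ e ∈ s.erase (.inl j), (v (.inl j) - v e) =
        (padeConst ν r)⁻¹ * (padeCoeff ν r j * (j : ℝ) ^ N) := by
    intro j hj
    have hj' : j ≤ r := by have := mem_range.1 hj; omega
    have he : s.erase (.inl j) = ((range (r + 1)).erase j).disjSum (range (r + 1)) := by
      ext (a | a) <;> simp [hs]
    have hp := padeCoeff_mul_prod ν hj'
    rw [he, prod_disjSum]
    simp only [hv, Sum.elim_inl, Sum.elim_inr, eval_pow, eval_X]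
    rw [← hp] at hK ⊢
    have hc := left_ne_zero_of_mul hK
    have hT := right_ne_zero_of_mul hK
    field_simp
  have hr : ∀ j ∈ range (r + 1), eval (v (.inr j)) ((X : ℝ[X]) ^ N) /
      ∏ e ∈ s.erase (.inr j), (v (.inr j) - v e) =
        -((padeConst ν r)⁻¹ * (padeCoeff (-ν) r j * ((j : ℝ) + ν) ^ N)) := by
    intro j hj
    have hj' : j ≤ r := by have := mem_range.1 hj; omega
    have he : s.erase (.inr j) = (range (r + 1)).disjSum ((range (r + 1)).erase j) := by
      ext (a | a) <;> simp [hs]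
    have hp := padeCoeff_mul_prod (-ν) hj'
    rw [padeConst_neg] at hp
    rw [he, prod_disjSum]
    simp only [hv, Sum.elim_inl, Sum.elim_inr, eval_pow, eval_X]
    have e1 : ∏ i ∈ (range (r + 1)).erase j, ((j : ℝ) + ν - (i + ν)) =
        ∏ i ∈ (range (r + 1)).erase j, ((j : ℝ) - i) :=
      prod_congr rfl fun i _ => by ring
    have e2 : ∏ i ∈ range (r + 1), ((j : ℝ) + ν - i) =
        ∏ i ∈ range (r + 1), ((j : ℝ) - (i + -ν)) :=
      prod_congr rfl fun i _ => by ring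
    have hK' : padeConst ν r = -(padeCoeff (-ν) r j * ((∏ i ∈ (range (r + 1)).erase j,
      ((j : ℝ) - i)) * ∏ i ∈ range (r + 1), ((j : ℝ) - (i + -ν)))) := by rw [hp, neg_neg]
    rw [e1, e2]
    rw [hK'] at hK ⊢
    have hK2 := neg_ne_zero.1 hK
    have hc := left_ne_zero_of_mul hK2
    have hT := right_ne_zero_of_mul hK2
    field_simp
  rw [hs, sum_disjSum, ← hs, sum_congr rfl hl, sum_congr rfl hr, sum_neg_distrib, ← mul_sum,
    ← mul_sum, ← sub_eq_add_neg, ← mul_sub] at hL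
  rcases mul_eq_zero.1 hL.symm with h | h
  · exact absurd h (inv_ne_zero hK)
  · exact sub_eq_zero.1 h

/-- The Padé remainder on the unit circle. The main terms of the exponential series cancel by
`pade_moments`, so only the Taylor remainders of order `2 r + 1` contribute. -/
lemma norm_pade_sub_le {ν : ℝ} (h0 : 0 < ν) (h1 : ν < 1) (r : ℕ) {φ : ℝ} (hφ : |φ| ≤ 1) :
    ‖(padePoly ν r).eval (Complex.exp (φ * Complex.I)) -
      Complex.exp (ν * φ * Complex.I) * (padePoly (-ν) r).eval (Complex.exp (φ * Complex.I))‖ ≤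
      48 * 12 ^ r * |φ| ^ (2 * r + 1) := by
  -- the Taylor remainder of `exp (e φ i)` after `2 r + 1` terms
  set R : ℝ → ℂ := fun e => Complex.exp (e * φ * Complex.I) -
    ∑ m ∈ range (2 * r + 1), (e * φ * Complex.I) ^ m / (m.factorial : ℂ) with hR
  have hRb : ∀ e : ℝ, 0 ≤ e → e ≤ r + 1 → ‖R e‖ ≤ 6 * 3 ^ r * |φ| ^ (2 * r + 1) := by
    intro e he0 he1
    have hn : ‖(e * φ * Complex.I : ℂ)‖ = e * |φ| := by simp [abs_of_nonneg he0]
    have hle : e * |φ| ≤ (r + 1) * |φ| := by gcongr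
    have hx : ‖(e * φ * Complex.I : ℂ)‖ / ((2 * r + 1).succ : ℕ) ≤ 1 / 2 := by
      rw [hn, div_le_iff₀ (by positivity)]
      push_cast
      nlinarith [abs_nonneg φ]
    have hb := Complex.exp_bound' hx
    rw [hn] at hb
    have hexp : ((r : ℝ) + 1) ^ (2 * r + 1) / ((2 * r + 1).factorial : ℝ) ≤ 3 ^ (r + 1) := by
      refine (Real.pow_div_factorial_le_exp _ (by positivity) _).trans ?_
      have : Real.exp ((r : ℝ) + 1) = Real.exp 1 ^ (r + 1) := by
        rw [← Real.exp_nat_mul]; push_cast; ring_nf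
      rw [this]
      gcongr
      exact Real.exp_one_lt_d9.le.trans (by norm_num)
    calc ‖R e‖ ≤ (e * |φ|) ^ (2 * r + 1) / ((2 * r + 1).factorial : ℝ) * 2 := hb
      _ ≤ ((r + 1) * |φ|) ^ (2 * r + 1) / ((2 * r + 1).factorial : ℝ) * 2 := by gcongr
      _ = (((r : ℝ) + 1) ^ (2 * r + 1) / ((2 * r + 1).factorial : ℝ)) * 2 *
          |φ| ^ (2 * r + 1) := by rw [mul_pow]; ring
      _ ≤ 3 ^ (r + 1) * 2 * |φ| ^ (2 * r + 1) := by gcongr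
      _ = _ := by ring
  have hexpand : (padePoly ν r).eval (Complex.exp (φ * Complex.I)) -
      Complex.exp (ν * φ * Complex.I) * (padePoly (-ν) r).eval (Complex.exp (φ * Complex.I)) =
      ∑ j ∈ range (r + 1), (padeCoeff ν r j : ℂ) * R j -
        ∑ j ∈ range (r + 1), (padeCoeff (-ν) r j : ℂ) * R ((j : ℝ) + ν) := by
    have hA : ∀ (c : ℕ → ℝ) (e : ℕ → ℝ), ∑ j ∈ range (r + 1), (c j : ℂ) * R (e j) =
        ∑ j ∈ range (r + 1), (c j : ℂ) * Complex.exp (e j * φ * Complex.I) -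
        ∑ m ∈ range (2 * r + 1), ((∑ j ∈ range (r + 1), c j * e j ^ m : ℝ) : ℂ) *
          ((φ * Complex.I) ^ m / (m.factorial : ℂ)) := by
      intro c e
      push_cast
      simp only [hR, mul_sub, sum_sub_distrib, sum_mul, mul_sum]
      congr 1
      rw [sum_comm]
      refine sum_congr rfl fun m _ => sum_congr rfl fun j _ => ?_
      rw [mul_assoc (e j : ℂ), mul_pow]; ring
    rw [hA (padeCoeff ν r) (fun j => j), hA (padeCoeff (-ν) r) (fun j => (j : ℝ) + ν)]
    rw [sum_congr (s₁ := range (2 * r + 1)) rfl fun m hm => by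
      rw [pade_moments h0 h1 (r := r) (N := m) (by have := mem_range.1 hm; omega)]]
    rw [sub_sub_sub_cancel_right]
    congr 1
    · simp only [padePoly, eval_finsetSum, eval_mul, eval_C, eval_pow, eval_X]
      refine sum_congr rfl fun j _ => ?_
      rw [← Complex.exp_nat_mul]; push_cast; ring_nf
    · simp only [padePoly, eval_finsetSum, eval_mul, eval_C, eval_pow, eval_X, mul_sum]
      refine sum_congr rfl fun j _ => ?_
      rw [← Complex.exp_nat_mul, mul_left_comm, ← Complex.exp_add]; push_cast; ring_nf
  have hsum : ∀ (ν' : ℝ) (e : ℕ → ℝ), |ν'| ≤ 1 → (∀ j ∈ range (r + 1), 0 ≤ e j ∧ e j ≤ r + 1) →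
      ‖∑ j ∈ range (r + 1), (padeCoeff ν' r j : ℂ) * R (e j)‖ ≤
        4 ^ (r + 1) * (6 * 3 ^ r * |φ| ^ (2 * r + 1)) := by
    intro ν' e hν' he
    calc _ ≤ ∑ j ∈ range (r + 1), |padeCoeff ν' r j| * (6 * 3 ^ r * |φ| ^ (2 * r + 1)) := by
          refine norm_sum_le_of_le _ fun j hj => ?_
          rw [norm_mul, Complex.norm_real, Real.norm_eq_abs]
          gcongr
          exact hRb _ (he j hj).1 (he j hj).2
      _ ≤ _ := by
          rw [← sum_mul]
          gcongr
          exact sum_abs_padeCoeff_le hν' r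
  have hr : ∀ j ∈ range (r + 1), (j : ℝ) ≤ r := by
    intro j hj
    have : j ≤ r := by have := mem_range.1 hj; omega
    exact_mod_cast this
  rw [hexpand]
  refine (norm_sub_le _ _).trans ?_
  have b1 := hsum ν (fun j => j) (by rw [abs_of_pos h0]; exact h1.le)
    fun j hj => ⟨by positivity, by linarith [hr j hj]⟩
  have b2 := hsum (-ν) (fun j => (j : ℝ) + ν) (by rw [abs_neg, abs_of_pos h0]; exact h1.le)
    fun j hj => ⟨by positivity, by linarith [hr j hj]⟩
  refine (add_le_add b1 b2).trans (le_of_eq ?_)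
  rw [show (12 : ℝ) = 4 * 3 by norm_num, mul_pow]
  ring

/-! ### Non-vanishing of the determinant of consecutive approximants -/

lemma norm_exp_mul_I_sub_one_ge {φ : ℝ} (hφ : |φ| ≤ Real.pi) :
    |φ| / 2 ≤ ‖Complex.exp (φ * Complex.I) - 1‖ := by
  rw [mul_comm, Complex.norm_exp_I_mul_ofReal_sub_one, norm_mul, Real.norm_eq_abs,
    Real.norm_eq_abs, abs_two]
  have h := Real.mul_abs_le_abs_sin (x := φ / 2) (by rw [abs_div, abs_two]; linarith)
  rw [abs_div, abs_two] at h
  have h2 : 1 / 2 ≤ 2 / Real.pi := by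
    rw [div_le_div_iff₀ two_pos Real.pi_pos]; linarith [Real.pi_le_four]
  nlinarith [abs_nonneg φ]

/-- A polynomial that is `O(|φ| ^ N)` at the points `exp (φ i)` of the unit circle vanishes to order
at least `N` at `1`. -/
lemma X_sub_one_pow_dvd {D : ℂ[X]} {N : ℕ} {K : ℝ}
    (h : ∀ φ : ℝ, |φ| ≤ 1 → ‖D.eval (Complex.exp (φ * Complex.I))‖ ≤ K * |φ| ^ N) :
    (X - C 1) ^ N ∣ D := by
  rcases eq_or_ne D 0 with rfl | hD
  · exact dvd_zero _
  rw [← le_rootMultiplicity_iff hD]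
  by_contra! hlt
  set m := rootMultiplicity 1 D with hm
  obtain ⟨E, hE, hE1⟩ := exists_eq_pow_rootMultiplicity_mul_and_not_dvd D hD 1
  rw [← hm] at hE
  apply hE1
  rw [dvd_iff_isRoot, IsRoot.def]
  obtain ⟨t, rfl⟩ : ∃ t, N = m + (t + 1) := ⟨N - m - 1, by omega⟩
  have hbound : ∀ φ : ℝ, φ ≠ 0 → |φ| ≤ 1 →
      ‖E.eval (Complex.exp (φ * Complex.I))‖ ≤ K * 2 ^ m * |φ| ^ (t + 1) := by
    intro φ h0 h1
    have h2 := h φ h1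
    have hpos : 0 < |φ| := abs_pos.2 h0
    rw [hE, eval_mul, eval_pow, eval_sub, eval_X, eval_C, norm_mul, norm_pow] at h2
    have h3 : (|φ| / 2) ^ m ≤ ‖Complex.exp (φ * Complex.I) - 1‖ ^ m := by
      gcongr; exact norm_exp_mul_I_sub_one_ge (h1.trans (by linarith [Real.pi_gt_three]))
    have h4 : (|φ| / 2) ^ m * ‖E.eval (Complex.exp (φ * Complex.I))‖ ≤ K * |φ| ^ (m + (t + 1)) :=
      (mul_le_mul_of_nonneg_right h3 (norm_nonneg _)).trans h2
    have h5 : 0 < (|φ| / 2) ^ m := by positivity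
    refine le_of_mul_le_mul_left (h4.trans (le_of_eq ?_)) h5
    rw [div_pow, pow_add]; field_simp
  have hcont : Filter.Tendsto (fun φ : ℝ => ‖E.eval (Complex.exp (φ * Complex.I))‖)
      (nhdsWithin 0 {0}ᶜ) (nhds ‖E.eval 1‖) := by
    have : Continuous (fun φ : ℝ => ‖E.eval (Complex.exp (φ * Complex.I))‖) := by
      have := E.continuous
      fun_prop
    have h := this.tendsto 0
    simp only [Complex.ofReal_zero, zero_mul, Complex.exp_zero] at h
    exact h.mono_left nhdsWithin_le_nhds
  have hlim : Filter.Tendsto (fun φ : ℝ => K * 2 ^ m * |φ| ^ (t + 1))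
      (nhdsWithin 0 {0}ᶜ) (nhds 0) := by
    have : Continuous (fun φ : ℝ => K * 2 ^ m * |φ| ^ (t + 1)) := by fun_prop
    have h := this.tendsto 0
    simp only [abs_zero, ne_eq, Nat.add_eq_zero_iff, one_ne_zero, and_false, not_false_eq_true,
      zero_pow, mul_zero] at h
    exact h.mono_left nhdsWithin_le_nhds
  have hle := le_of_tendsto_of_tendsto hcont hlim (by
    have hball : ∀ᶠ φ : ℝ in nhdsWithin 0 {0}ᶜ, |φ| < 1 :=
      nhdsWithin_le_nhds (by simpa using Metric.ball_mem_nhds (0 : ℝ) one_pos |> fun h =>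
        Filter.mem_of_superset h (fun x hx => by simpa using hx))
    filter_upwards [hball, self_mem_nhdsWithin] with φ h1 h0
    exact hbound φ h0 h1.le)
  exact norm_le_zero_iff.1 hle

/-- The determinant `P_r Q_(r+1) - P_(r+1) Q_r` of two consecutive Padé approximants. -/
noncomputable def padeDet (ν : ℝ) (r : ℕ) : ℂ[X] :=
  padePoly ν r * padePoly (-ν) (r + 1) - padePoly ν (r + 1) * padePoly (-ν) r

lemma padePoly_natDegree_le (ν : ℝ) (r : ℕ) : (padePoly ν r).natDegree ≤ r := by
  refine natDegree_sum_le_of_forall_le _ _ fun j hj => ?_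
  refine (natDegree_C_mul_X_pow_le _ _).trans ?_
  have := mem_range.1 hj; omega

lemma norm_padePoly_eval_le {ν : ℝ} (hν : |ν| ≤ 1) (r : ℕ) {y : ℂ} (hy : ‖y‖ = 1) :
    ‖(padePoly ν r).eval y‖ ≤ 4 ^ (r + 1) := by
  rw [padePoly, eval_finsetSum]
  refine le_trans (norm_sum_le_of_le _ fun j _ => ?_) (sum_abs_padeCoeff_le hν r)
  rw [eval_mul, eval_pow, eval_C, eval_X, norm_mul, norm_pow, hy, one_pow, mul_one,
    Complex.norm_real, Real.norm_eq_abs]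

lemma padePoly_eval_zero (ν : ℝ) (r : ℕ) :
    (padePoly ν r).eval 0 = ((bin (r - ν) r : ℝ) : ℂ) := by
  rw [padePoly, eval_finsetSum, sum_eq_single 0]
  · simp [padeCoeff, bin]
  · intro j _ hj; simp [hj]
  · simp

lemma bin_succ_top (x : ℝ) (r : ℕ) : bin (x + 1) (r + 1) = (x + 1) / (r + 1) * bin x r := by
  unfold bin
  rw [prod_range_succ', Nat.factorial_succ]
  have : (r.factorial : ℝ) ≠ 0 := by positivity
  push_cast
  simp only [add_sub_add_right_eq_sub, sub_zero]
  field_simp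

lemma bin_ne_zero {ν : ℝ} (hν : |ν| < 1) (r : ℕ) : bin (r + ν) r ≠ 0 := by
  rw [abs_lt] at hν
  refine div_ne_zero (prod_ne_zero_iff.2 fun i hi => ?_) (by positivity)
  have h : i + 1 ≤ r := mem_range.1 hi
  have : (i : ℝ) + 1 ≤ r := by exact_mod_cast h
  linarith

/-- The determinant has degree at most `2 r + 1`, is divisible by `(X - 1) ^ (2 r + 1)`, and does not
vanish at `0`; hence it is a nonzero constant times `(X - 1) ^ (2 r + 1)`. -/
lemma padeDet_eval_ne_zero {ν : ℝ} (h0 : 0 < ν) (h1 : ν < 1) (r : ℕ) {y : ℂ} (hy : y ≠ 1) :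
    (padeDet ν r).eval y ≠ 0 := by
  have hν : |ν| < 1 := by rw [abs_of_pos h0]; exact h1
  have hν' : |-ν| < 1 := by rwa [abs_neg]
  have hD0 : (padeDet ν r).eval 0 ≠ 0 := by
    rw [padeDet, eval_sub, eval_mul, eval_mul, padePoly_eval_zero, padePoly_eval_zero,
      padePoly_eval_zero, padePoly_eval_zero]
    have e1 := bin_succ_top (r - ν) r
    have e2 := bin_succ_top (r + ν) r
    have d1 : ((r + 1 : ℕ) : ℝ) - ν = r - ν + 1 := by push_cast; ring
    have d2 : ((r + 1 : ℕ) : ℝ) - -ν = r + ν + 1 := by push_cast; ring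
    rw [d1, d2, e1, e2, sub_neg_eq_add, sub_eq_add_neg (r : ℝ) ν]
    have n1 := bin_ne_zero hν r
    have n2 := bin_ne_zero hν' r
    norm_cast
    have : bin (r + -ν) r * ((r + ν + 1) / (r + 1) * bin (r + ν) r) -
        (r + -ν + 1) / (r + 1) * bin (r + -ν) r * bin (r + ν) r =
        bin (r + -ν) r * bin (r + ν) r * (2 * ν / (r + 1)) := by field_simp; ring
    push_cast at this ⊢
    rw [this]
    positivity
  have hdvd : (X - C 1) ^ (2 * r + 1) ∣ padeDet ν r := by
    refine X_sub_one_pow_dvd (K := 48 * 12 ^ r * 4 ^ (r + 2) + 48 * 12 ^ (r + 1) * 4 ^ (r + 1))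
      fun φ hφ => ?_
    set y := Complex.exp (φ * Complex.I) with hy
    have hy1 : ‖y‖ = 1 := Complex.norm_exp_ofReal_mul_I φ
    set α := Complex.exp (ν * φ * Complex.I) with hα
    have f1 := norm_pade_sub_le h0 h1 r hφ
    have f2 := norm_pade_sub_le h0 h1 (r + 1) hφ
    rw [← hy, ← hα] at f1 f2
    have g1 := norm_padePoly_eval_le hν'.le r hy1
    have g2 := norm_padePoly_eval_le hν'.le (r + 1) hy1
    have f2' : ‖(padePoly ν (r + 1)).eval y - α * (padePoly (-ν) (r + 1)).eval y‖ ≤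
        48 * 12 ^ (r + 1) * |φ| ^ (2 * r + 1) := by
      refine f2.trans ?_
      have : |φ| ^ (2 * (r + 1) + 1) ≤ |φ| ^ (2 * r + 1) :=
        pow_le_pow_of_le_one (abs_nonneg _) hφ (by omega)
      gcongr
    have e : (padeDet ν r).eval y =
        ((padePoly ν r).eval y - α * (padePoly (-ν) r).eval y) * (padePoly (-ν) (r + 1)).eval y -
        ((padePoly ν (r + 1)).eval y - α * (padePoly (-ν) (r + 1)).eval y) *
          (padePoly (-ν) r).eval y := by
      rw [padeDet, eval_sub, eval_mul, eval_mul]; ring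
    rw [e]
    refine (norm_sub_le _ _).trans ?_
    rw [norm_mul, norm_mul]
    calc _ ≤ 48 * 12 ^ r * |φ| ^ (2 * r + 1) * 4 ^ (r + 1 + 1) +
          48 * 12 ^ (r + 1) * |φ| ^ (2 * r + 1) * 4 ^ (r + 1) := by gcongr
      _ = _ := by ring
  obtain ⟨E, hE⟩ := hdvd
  have hE0 : E ≠ 0 := by rintro rfl; rw [hE] at hD0; simp at hD0
  have hdeg : (padeDet ν r).natDegree ≤ 2 * r + 1 := by
    refine (natDegree_sub_le _ _).trans (max_le ?_ ?_) <;>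
    refine natDegree_mul_le.trans ?_
    · have := padePoly_natDegree_le ν r
      have := padePoly_natDegree_le (-ν) (r + 1)
      omega
    · have := padePoly_natDegree_le ν (r + 1)
      have := padePoly_natDegree_le (-ν) r
      omega
  have hmon : ((X - C (1 : ℂ)) ^ (2 * r + 1)).Monic := (monic_X_sub_C 1).pow _
  rw [hE, hmon.natDegree_mul' hE0, natDegree_pow, natDegree_X_sub_C] at hdeg
  rw [eq_C_of_natDegree_eq_zero (by omega : E.natDegree = 0)] at hE hE0
  rw [hE, eval_mul, eval_pow, eval_sub, eval_X, eval_C, eval_C]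
  exact mul_ne_zero (pow_ne_zero _ (sub_ne_zero.2 hy)) (fun h => hE0 (by rw [h, C_0]))

/-! ### Comparison of two solutions -/

open scoped ComplexConjugate

/-- The pair `(A, γ)` of elements of `S` comes from a solution with data `k`, `c`, `θ`. In the
application `S` is the image of `ℤ[√-d]`, `A = k + m√-d`, `γ ^ n = A β` and `c = |β|`. The angle `φ`
is the argument of `-A / conj A`, which is small since `A` is nearly imaginary, and `root` is the
`n`-th root of the relation `γ ^ n / conj γ ^ n = (A / conj A) (β / conj β)`, so that
`θ ^ n = -β / conj β`. -/
structure IsSol (S : Subring ℂ) (n : ℕ) (k c : ℝ) (θ A γ : ℂ) (φ : ℝ) : Prop where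
  memA : A ∈ S
  memγ : γ ∈ S
  trace : A + conj A = 2 * k
  norm_pow : ‖γ‖ ^ n = c * ‖A‖
  exp_eq : -A = conj A * Complex.exp (φ * Complex.I)
  abs_le : |φ| ≤ 4 * k / ‖A‖
  root : γ = conj γ * θ * Complex.exp ((1 / n : ℝ) * φ * Complex.I)

/-- `(conj A) ^ r padePoly(-A / conj A)` is an integral form in `-A` and `conj A` once the denominators
of the coefficients are cleared. -/
lemma homogenized_mem (S : Subring ℂ) (hS : ∀ z ∈ S, conj z ∈ S) {n : ℕ} {ν : ℝ} (r : ℕ)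
    (hint : ∀ j ≤ r, ∃ z : ℤ, (n : ℝ) ^ (2 * r) * padeCoeff ν r j = z) {A y : ℂ} (hA : A ∈ S)
    (hy : -A = conj A * y) :
    (n : ℂ) ^ (2 * r) * conj A ^ r * (padePoly ν r).eval y ∈ S := by
  rw [padePoly, eval_finsetSum, mul_sum]
  refine S.sum_mem fun j hj => ?_
  have hj' : j ≤ r := by have := mem_range.1 hj; omega
  obtain ⟨z, hz⟩ := hint j hj'
  have hz' : (n : ℂ) ^ (2 * r) * (padeCoeff ν r j : ℂ) = z := by
    exact_mod_cast congrArg (Complex.ofReal) hz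
  have e : (n : ℂ) ^ (2 * r) * conj A ^ r * eval y (C (padeCoeff ν r j : ℂ) * X ^ j) =
      z * ((-A) ^ j * conj A ^ (r - j)) := by
    rw [eval_mul, eval_C, eval_pow, eval_X, hy, mul_pow, ← hz']
    have : conj A ^ r = conj A ^ (r - j) * conj A ^ j := by
      rw [← pow_add, Nat.sub_add_cancel hj']
    rw [this]; ring
  rw [e]
  exact S.mul_mem (intCast_mem S z)
    (S.mul_mem (S.pow_mem (S.neg_mem hA) _) (S.pow_mem (hS _ hA) _))

/-- After multiplication by `n ^ (2 r) (conj A) ^ r`, the difference of the two sides is an element of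
`S` of norm less than `1`, hence `0`. Hypothesis `h1` controls the Padé remainder at `-A / conj A` and
`h2` controls the error `4 k / ‖B‖` of the second solution. -/
lemma form_eq_zero (S : Subring ℂ) (hS : ∀ z ∈ S, conj z ∈ S) (hS1 : ∀ z ∈ S, z ≠ 0 → 1 ≤ ‖z‖)
    {n : ℕ} (hn : 2 ≤ n) {k c : ℝ} (hk : 0 < k) {θ A γ B η : ℂ} {φ ψ : ℝ}
    (hA : IsSol S n k c θ A γ φ) (hB : IsSol S n k c θ B η ψ) (hX : 4 * k ≤ ‖A‖) (hY : 0 < ‖B‖)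
    {K : ℝ} (hK : K = 192 * n ^ 2 * (k ^ 2 + 1)) (r : ℕ)
    (h1 : 96 * ‖γ‖ * ‖η‖ < (‖A‖ / K) ^ r) (h2 : 32 * k * ‖γ‖ * ‖η‖ * (K * ‖A‖) ^ r < ‖B‖) :
    (padePoly (1 / n : ℝ) r).eval (Complex.exp (φ * Complex.I)) * (conj γ * η) =
      (padePoly (-(1 / n : ℝ)) r).eval (Complex.exp (φ * Complex.I)) * (γ * conj η) := by
  have hnpos : 0 < n := by omega
  have hn0 : (0 : ℝ) < n := by exact_mod_cast hnpos
  have hn1 : (1 : ℝ) ≤ n := by exact_mod_cast hnpos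
  have hn2 : (2 : ℝ) ≤ n := by exact_mod_cast hn
  have hX0 : 0 < ‖A‖ := by linarith
  have hKpos : 0 < K := by rw [hK]; positivity
  set ν : ℝ := 1 / n with hν
  have hν0 : 0 < ν := by positivity
  have hν1 : ν < 1 := by rw [hν, div_lt_one hn0]; linarith
  set y := Complex.exp (φ * Complex.I) with hy
  have hy1 : ‖y‖ = 1 := Complex.norm_exp_ofReal_mul_I φ
  set α := Complex.exp (ν * φ * Complex.I) with hα
  set β := Complex.exp (ν * ψ * Complex.I) with hβ
  set P := (padePoly ν r).eval y with hP
  set Q := (padePoly (-ν) r).eval y with hQ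
  have hpm := homogenized_mem S hS r (fun j hj => padeCoeff_integral n hnpos hj) hA.memA hA.exp_eq
  have hqm := homogenized_mem S hS (n := n) (ν := -ν) r (fun j hj => by
    rw [padeCoeff_neg hj]; exact padeCoeff_integral n hnpos (Nat.sub_le r j)) hA.memA hA.exp_eq
  rw [← hy] at hpm hqm
  rw [← hP] at hpm
  rw [← hQ] at hqm
  have hΛm : (n : ℂ) ^ (2 * r) * conj A ^ r * P * (conj γ * η) -
      (n : ℂ) ^ (2 * r) * conj A ^ r * Q * (γ * conj η) ∈ S :=
    S.sub_mem (S.mul_mem hpm (S.mul_mem (hS _ hA.memγ) hB.memγ))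
      (S.mul_mem hqm (S.mul_mem hA.memγ (hS _ hB.memγ)))
  -- the two solutions share the constant `θ`, so it cancels
  have hrel : α * (conj γ * η) = β * (γ * conj η) := by
    have e1 := hA.root
    have e2 := hB.root
    rw [← hα] at e1
    rw [← hβ] at e2
    calc α * (conj γ * η) = α * (conj γ * (conj η * θ * β)) := by rw [← e2]
      _ = β * ((conj γ * θ * α) * conj η) := by ring
      _ = _ := by rw [← e1]
  have hφ1 : |φ| ≤ 1 := hA.abs_le.trans ((div_le_one hX0).2 hX)
  have hf := norm_pade_sub_le hν0 hν1 r hφ1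
  rw [← hy, ← hα, ← hP, ← hQ] at hf
  have hQb : ‖Q‖ ≤ 4 ^ (r + 1) :=
    norm_padePoly_eval_le (by rw [abs_neg, abs_of_pos hν0]; exact hν1.le) r hy1
  have hβb : ‖β - 1‖ ≤ 4 * k / ‖B‖ := by
    have h := Real.norm_exp_I_mul_ofReal_sub_one_le (x := ν * ψ)
    have e : Complex.exp (Complex.I * (ν * ψ : ℝ)) = β := by rw [hβ]; push_cast; ring_nf
    rw [e, Real.norm_eq_abs, abs_mul, abs_of_pos hν0] at h
    refine h.trans (le_trans ?_ hB.abs_le)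
    exact mul_le_of_le_one_left (abs_nonneg _) hν1.le
  have hΛeq : (n : ℂ) ^ (2 * r) * conj A ^ r * P * (conj γ * η) -
      (n : ℂ) ^ (2 * r) * conj A ^ r * Q * (γ * conj η) =
      (n : ℂ) ^ (2 * r) * conj A ^ r * ((P - α * Q) * (conj γ * η) + Q * (β - 1) * (γ * conj η)) := by
    linear_combination (n : ℂ) ^ (2 * r) * conj A ^ r * Q * hrel
  have hk1 : 4 * k / ‖A‖ ≤ 1 := (div_le_one hX0).2 hX
  -- the approximation error
  have b1 : (n : ℝ) ^ (2 * r) * ‖A‖ ^ r * (48 * 12 ^ r * |φ| ^ (2 * r + 1)) ≤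
      48 * (K / ‖A‖) ^ r := by
    have : |φ| ^ (2 * r + 1) ≤ (4 * k / ‖A‖) ^ (2 * r) := by
      calc |φ| ^ (2 * r + 1) ≤ (4 * k / ‖A‖) ^ (2 * r + 1) := by gcongr; exact hA.abs_le
        _ ≤ _ := pow_le_pow_of_le_one (by positivity) hk1 (by omega)
    calc _ ≤ (n : ℝ) ^ (2 * r) * ‖A‖ ^ r * (48 * 12 ^ r * (4 * k / ‖A‖) ^ (2 * r)) := by gcongr
      _ = 48 * (192 * n ^ 2 * k ^ 2 / ‖A‖) ^ r := by
        rw [pow_mul, pow_mul]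
        have : (192 * n ^ 2 * k ^ 2 / ‖A‖ : ℝ) = n ^ 2 * ‖A‖ * 12 * (4 * k / ‖A‖) ^ 2 := by
          field_simp; ring
        rw [this, mul_pow, mul_pow, mul_pow]; ring
      _ ≤ _ := by
        rw [hK]; gcongr; linarith
  -- the contribution of the second solution
  have b2 : (n : ℝ) ^ (2 * r) * ‖A‖ ^ r * (4 ^ (r + 1) * (4 * k / ‖B‖)) ≤
      16 * k / ‖B‖ * (K * ‖A‖) ^ r := by
    calc _ = 16 * k / ‖B‖ * (4 * n ^ 2 * ‖A‖) ^ r := by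
          rw [pow_mul, mul_pow, mul_pow, pow_succ]; ring
      _ ≤ _ := by
        gcongr
        rw [hK]
        nlinarith [sq_nonneg k, sq_nonneg (n : ℝ), mul_nonneg (sq_nonneg k) (sq_nonneg (n : ℝ))]
  have hts : 0 ≤ ‖γ‖ * ‖η‖ := by positivity
  have hlt : ‖(n : ℂ) ^ (2 * r) * conj A ^ r * P * (conj γ * η) -
      (n : ℂ) ^ (2 * r) * conj A ^ r * Q * (γ * conj η)‖ < 1 := by
    rw [hΛeq]
    calc _ ≤ (n : ℝ) ^ (2 * r) * ‖A‖ ^ r * (48 * 12 ^ r * |φ| ^ (2 * r + 1) * (‖γ‖ * ‖η‖) +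
          4 ^ (r + 1) * (4 * k / ‖B‖) * (‖γ‖ * ‖η‖)) := by
          rw [norm_mul, norm_mul, norm_pow, norm_pow, Complex.norm_natCast, RCLike.norm_conj]
          gcongr
          refine (norm_add_le _ _).trans ?_
          simp only [norm_mul, RCLike.norm_conj]
          gcongr
      _ = ((n : ℝ) ^ (2 * r) * ‖A‖ ^ r * (48 * 12 ^ r * |φ| ^ (2 * r + 1))) * (‖γ‖ * ‖η‖) +
          ((n : ℝ) ^ (2 * r) * ‖A‖ ^ r * (4 ^ (r + 1) * (4 * k / ‖B‖))) * (‖γ‖ * ‖η‖) := by ring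
      _ ≤ 48 * (K / ‖A‖) ^ r * (‖γ‖ * ‖η‖) + 16 * k / ‖B‖ * (K * ‖A‖) ^ r * (‖γ‖ * ‖η‖) := by
          gcongr
      _ < 1 / 2 + 1 / 2 := by
          apply add_lt_add
          · have e : (K / ‖A‖) ^ r = ((‖A‖ / K) ^ r)⁻¹ := by rw [← inv_pow, inv_div]
            have hp : 0 < (‖A‖ / K) ^ r := by positivity
            rw [e]
            calc 48 * ((‖A‖ / K) ^ r)⁻¹ * (‖γ‖ * ‖η‖) =
                (96 * ‖γ‖ * ‖η‖) / (‖A‖ / K) ^ r / 2 := by field_simp; ring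
              _ < 1 / 2 := by
                have := (div_lt_one hp).2 h1
                linarith
          · calc 16 * k / ‖B‖ * (K * ‖A‖) ^ r * (‖γ‖ * ‖η‖) =
                (32 * k * ‖γ‖ * ‖η‖ * (K * ‖A‖) ^ r) / ‖B‖ / 2 := by field_simp; ring
              _ < 1 / 2 := by
                have := (div_lt_one hY).2 h2
                linarith
      _ = 1 := by norm_num
  have hzero : (n : ℂ) ^ (2 * r) * conj A ^ r * P * (conj γ * η) -
      (n : ℂ) ^ (2 * r) * conj A ^ r * Q * (γ * conj η) = 0 := by
    by_contra hne
    exact absurd hlt (not_lt.2 (hS1 _ hΛm hne))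
  have hfac : (n : ℂ) ^ (2 * r) * conj A ^ r ≠ 0 := by
    refine mul_ne_zero (pow_ne_zero _ (by exact_mod_cast hnpos.ne')) (pow_ne_zero _ ?_)
    rw [Ne, map_eq_zero]
    exact norm_pos_iff.1 hX0
  refine mul_left_cancel₀ hfac ?_
  linear_combination hzero

/-- A single sufficiently large solution bounds all solutions with the same `c` and `θ`. For a much
larger solution `(B, η)`, take the least `r` with `96 ‖γ‖ ‖η‖ < (‖A‖ / K) ^ r`; then `form_eq_zero`
applies to `r` and `r + 1`, contradicting `padeDet_eval_ne_zero`. -/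
theorem gap_principle (S : Subring ℂ) (hS : ∀ z ∈ S, conj z ∈ S)
    (hS1 : ∀ z ∈ S, z ≠ 0 → 1 ≤ ‖z‖) {n : ℕ} (hn : 5 ≤ n) {k c : ℝ} (hk : 0 < k) (hc : 0 < c)
    (θ : ℂ) :
    ∃ X₀ : ℝ, ∀ A γ φ, IsSol S n k c θ A γ φ → X₀ ≤ ‖A‖ →
      ∃ Y₀ : ℝ, ∀ B η ψ, IsSol S n k c θ B η ψ → ‖B‖ < Y₀ := by
  obtain ⟨K, hK⟩ : ∃ K : ℝ, K = 192 * n ^ 2 * (k ^ 2 + 1) := ⟨_, rfl⟩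
  have hn1 : (1 : ℝ) ≤ n := by exact_mod_cast (by omega : 1 ≤ n)
  have hK1 : 1 < K := by
    rw [hK]; nlinarith [sq_nonneg k, mul_nonneg (sq_nonneg k) (sq_nonneg (n : ℝ))]
  -- `K ^ 3 ≤ ‖A‖` ensures `K * ‖A‖ ≤ D ^ 2` below, so that `(K * ‖A‖) ^ (r + 1) = O(‖η‖ ^ 2)`
  refine ⟨max (4 * k) (K ^ 3), fun A γ φ hA hX => ?_⟩
  have hX1 : 4 * k ≤ ‖A‖ := (le_max_left _ _).trans hX
  have hX2 : K ^ 3 ≤ ‖A‖ := (le_max_right _ _).trans hX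
  have hX0 : 0 < ‖A‖ := by linarith
  set D := ‖A‖ / K with hD
  have hDK : K ^ 2 ≤ D := by rw [hD, le_div_iff₀ (by linarith)]; linarith [pow_succ K 2]
  have hD1 : 1 < D := by nlinarith
  have hKX : K * ‖A‖ ≤ D ^ 2 := by
    have : ‖A‖ = D * K := by rw [hD]; field_simp
    rw [this]; nlinarith
  have ht : 0 < ‖γ‖ := by
    by_contra h
    have h0 : ‖γ‖ = 0 := le_antisymm (not_lt.1 h) (norm_nonneg _)
    have := hA.norm_pow
    rw [h0, zero_pow (by omega)] at this
    have : 0 < c * ‖A‖ := by positivity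
    linarith
  set t := ‖γ‖ with ht'
  set s₀ : ℝ := 1 + 1 / (96 * t) + 32 * 96 ^ 2 * k * t ^ 3 * D ^ 4 * c with hs₀
  have hs₀1 : 1 ≤ s₀ := by
    have : 0 ≤ 1 / (96 * t) + 32 * 96 ^ 2 * k * t ^ 3 * D ^ 4 * c := by positivity
    linarith
  refine ⟨s₀ ^ n / c, fun B η ψ hB => ?_⟩
  by_contra! hY
  have hY0 : 0 < ‖B‖ := lt_of_lt_of_le (by positivity) hY
  set s := ‖η‖ with hs
  have hss : s₀ ≤ s := by
    refine le_of_pow_le_pow_left₀ (by omega : n ≠ 0) (norm_nonneg _) ?_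
    rw [hB.norm_pow]
    rw [div_le_iff₀ hc] at hY
    linarith
  have hs1 : 1 ≤ s := hs₀1.trans hss
  have hex : ∃ r : ℕ, 96 * t * s < D ^ r := pow_unbounded_of_one_lt _ hD1
  classical
  set r := Nat.find hex with hr
  have hr1 : 96 * t * s < D ^ r := Nat.find_spec hex
  have h96 : 1 ≤ 96 * t * s := by
    have : 1 / (96 * t) ≤ s := by
      have : 0 ≤ 32 * 96 ^ 2 * k * t ^ 3 * D ^ 4 * c := by positivity
      linarith
    rw [div_le_iff₀ (by positivity)] at this
    linarith
  have hrpos : r ≠ 0 := by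
    intro h0
    rw [h0, pow_zero] at hr1
    linarith
  obtain ⟨u, hu⟩ := Nat.exists_eq_succ_of_ne_zero hrpos
  have hDu : D ^ u ≤ 96 * t * s := not_lt.1 (Nat.find_min hex (by omega))
  have hYs : s ^ n = c * ‖B‖ := hB.norm_pow
  have hbig : 32 * k * t * s * (K * ‖A‖) ^ (r + 1) < ‖B‖ := by
    have h1 : (K * ‖A‖) ^ (r + 1) ≤ D ^ 4 * (96 * t * s) ^ 2 := by
      calc (K * ‖A‖) ^ (r + 1) ≤ (D ^ 2) ^ (r + 1) := by gcongr
        _ = D ^ 4 * (D ^ u) ^ 2 := by rw [hu, Nat.succ_eq_add_one]; ring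
        _ ≤ _ := by gcongr
    have h2 : 32 * 96 ^ 2 * k * t ^ 3 * D ^ 4 * c < s := by
      have : 0 < 1 / (96 * t) := by positivity
      linarith
    have h3 : s ^ 4 ≤ s ^ n := pow_le_pow_right₀ hs1 (by omega)
    refine lt_of_mul_lt_mul_left (a := c) ?_ hc.le
    calc c * (32 * k * t * s * (K * ‖A‖) ^ (r + 1)) ≤
        c * (32 * k * t * s * (D ^ 4 * (96 * t * s) ^ 2)) := by gcongr
      _ = (32 * 96 ^ 2 * k * t ^ 3 * D ^ 4 * c) * s ^ 3 := by ring
      _ < s * s ^ 3 := by gcongr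
      _ = s ^ 4 := by ring
      _ ≤ c * ‖B‖ := by rw [← hYs]; exact h3
  have hKX1 : 1 ≤ K * ‖A‖ := by nlinarith [one_le_pow₀ hK1.le (n := 3)]
  have hbig' : 32 * k * t * s * (K * ‖A‖) ^ r < ‖B‖ := by
    refine lt_of_le_of_lt ?_ hbig
    have : (K * ‖A‖) ^ r ≤ (K * ‖A‖) ^ (r + 1) := pow_le_pow_right₀ hKX1 (by omega)
    gcongr
  have hr2 : 96 * t * s < D ^ (r + 1) :=
    hr1.trans_le (pow_le_pow_right₀ hD1.le (by omega))
  have z1 := form_eq_zero S hS hS1 (by omega) hk hA hB hX1 hY0 hK r hr1 hbig'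
  have z2 := form_eq_zero S hS hS1 (by omega) hk hA hB hX1 hY0 hK (r + 1) hr2 hbig
  have hn0 : (0 : ℝ) < n := by linarith
  have hne : Complex.exp (φ * Complex.I) ≠ 1 := by
    intro h
    have h1 := hA.exp_eq
    rw [h, mul_one] at h1
    have h2 := hA.trace
    rw [← h1, add_neg_cancel] at h2
    have : (2 * k : ℝ) = 0 := by exact_mod_cast h2.symm
    linarith
  refine padeDet_eval_ne_zero (ν := 1 / n) (by positivity)
    (by rw [div_lt_one hn0]; exact_mod_cast (by omega : 1 < n)) r hne ?_
  have hγη : γ * conj η ≠ 0 := by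
    refine mul_ne_zero (norm_pos_iff.1 ht) ?_
    rw [Ne, map_eq_zero]
    exact norm_pos_iff.1 (by linarith)
  refine (mul_eq_zero.1 ?_).resolve_right hγη
  rw [padeDet, eval_sub, eval_mul, eval_mul]
  set P := (padePoly (1 / n : ℝ) r).eval (Complex.exp (φ * Complex.I))
  set P' := (padePoly (1 / n : ℝ) (r + 1)).eval (Complex.exp (φ * Complex.I))
  linear_combination P' * z1 - P * z2

/-! ### Arithmetic in `ℤ[√-d]` -/

/-- The embedding `ℤ[√-d] → ℂ` sending `√-d` to `i √d`. -/
noncomputable def toC (d : ℕ) : ℤ√(-(d : ℤ)) →+* ℂ :=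
  Zsqrtd.lift ⟨(√(d : ℝ) : ℝ) * Complex.I, by
    rw [mul_mul_mul_comm, Complex.I_mul_I, ← Complex.ofReal_mul,
      Real.mul_self_sqrt (Nat.cast_nonneg d)]
    push_cast; ring⟩

lemma toC_apply (d : ℕ) (z : ℤ√(-(d : ℤ))) :
    toC d z = (z.re : ℂ) + z.im * ((√(d : ℝ) : ℝ) * Complex.I) := rfl

lemma conj_toC (d : ℕ) (z : ℤ√(-(d : ℤ))) : conj (toC d z) = toC d (star z) := by
  rw [toC_apply, toC_apply]
  simp

lemma norm_toC_sq (d : ℕ) (z : ℤ√(-(d : ℤ))) : ‖toC d z‖ ^ 2 = (z.norm : ℝ) := by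
  have h : ((‖toC d z‖ ^ 2 : ℝ) : ℂ) = ((z.norm : ℝ) : ℂ) := by
    push_cast
    rw [← Complex.mul_conj', conj_toC, ← map_mul, ← Zsqrtd.norm_eq_mul_conj, map_intCast]
  exact_mod_cast h

lemma one_le_norm_toC {d : ℕ} (hd : 0 < d) {z : ℤ√(-(d : ℤ))} (hz : z ≠ 0) : 1 ≤ ‖toC d z‖ := by
  have h0 : z.norm ≠ 0 := fun h => hz ((Zsqrtd.norm_eq_zero_iff (by omega) z).1 h)
  have h1 : 0 ≤ z.norm := Zsqrtd.norm_nonneg (by omega) z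
  have h2 : (1 : ℝ) ≤ z.norm := by exact_mod_cast (by omega : 1 ≤ z.norm)
  rw [← norm_toC_sq] at h2
  exact (one_le_sq_iff₀ (norm_nonneg _)).1 h2

/-- Thue's lemma: a short nonzero `(x, y)` with `x m ≡ y k` modulo `p`. -/
lemma exists_small_multiple {p : ℕ} (hp : 0 < p) (k m : ℤ) :
    ∃ x y : ℤ, (x ≠ 0 ∨ y ≠ 0) ∧ x ^ 2 ≤ p ∧ y ^ 2 ≤ p ∧ (p : ℤ) ∣ x * m - y * k := by
  have : NeZero p := ⟨hp.ne'⟩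
  set s := Nat.sqrt p with hs
  have hcard : Fintype.card (ZMod p) < Fintype.card (Fin (s + 1) × Fin (s + 1)) := by
    rw [ZMod.card, Fintype.card_prod, Fintype.card_fin]
    exact Nat.lt_succ_sqrt p
  obtain ⟨u, v, huv, h⟩ := Fintype.exists_ne_map_eq_of_card_lt
    (fun u : Fin (s + 1) × Fin (s + 1) =>
      (((u.1 : ℕ) * m - (u.2 : ℕ) * k : ℤ) : ZMod p)) hcard
  have hsq : ((s : ℤ)) ^ 2 ≤ p := by
    have := Nat.sqrt_le' p
    exact_mod_cast this
  have hb : ∀ a b : Fin (s + 1), (((a : ℕ) : ℤ) - (b : ℕ)) ^ 2 ≤ p := by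
    intro a b
    refine le_trans ?_ hsq
    have := a.2
    have := b.2
    apply sq_le_sq'  <;> omega
  refine ⟨(u.1 : ℕ) - (v.1 : ℕ), (u.2 : ℕ) - (v.2 : ℕ), ?_, hb _ _, hb _ _, ?_⟩
  · by_contra! hc
    refine huv (Prod.ext (Fin.ext ?_) (Fin.ext ?_))
    · have := hc.1; omega
    · have := hc.2; omega
  · rw [← ZMod.intCast_zmod_eq_zero_iff_dvd]
    have h' := sub_eq_zero.2 h
    push_cast at h' ⊢
    linear_combination h'

/-- An elementary substitute for the factorization of `(k + m√-d)` as the `n`-th power of an ideal: for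
`γ = x + y√-d` from Thue's lemma, `γ ^ n` is a multiple of `k + m√-d`. -/
lemma exists_pow_eq_mul {n d k p m : ℕ} (hp : p.Prime) (hpk : ¬ p ∣ k) (hn : n ≠ 0)
    (h : d * m ^ 2 + k ^ 2 = p ^ n) :
    ∃ γ β : ℤ√(-(d : ℤ)), γ ≠ 0 ∧ γ ^ n = ⟨k, m⟩ * β ∧ γ.norm ≤ (1 + d) * p := by
  have hpm : ¬ p ∣ m := by
    intro hm
    apply hpk
    have h1 : p ∣ d * m ^ 2 := Dvd.dvd.mul_left (dvd_pow hm two_ne_zero) d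
    have h2 : p ∣ d * m ^ 2 + k ^ 2 := h ▸ dvd_pow_self p hn
    exact hp.dvd_of_dvd_pow ((Nat.dvd_add_right h1).1 h2)
  have hcop : Nat.Coprime m (p ^ n) :=
    (Nat.Coprime.pow_left n ((Nat.Prime.coprime_iff_not_dvd hp).2 hpm)).symm
  have hz : (d : ℤ) * m ^ 2 + k ^ 2 = p ^ n := by exact_mod_cast h
  obtain ⟨x, y, hxy, hx, hy, w, hw⟩ := exists_small_multiple hp.pos k m
  set i : ZMod (p ^ n) := (m : ZMod (p ^ n))⁻¹ with hi
  have hmi : (m : ZMod (p ^ n)) * i = 1 := ZMod.coe_mul_inv_eq_one m hcop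
  have hp0 : (p : ZMod (p ^ n)) ^ n = 0 := by
    have := ZMod.natCast_self (p ^ n)
    exact_mod_cast this
  have hzz : (d : ZMod (p ^ n)) * m ^ 2 + k ^ 2 = 0 := by
    rw [← hp0]; exact_mod_cast congrArg (Nat.cast : ℕ → ZMod (p ^ n)) h
  -- the reduction `√-d ↦ -k / m`, whose kernel is generated by `k + m √-d`
  set ψ : ℤ√(-(d : ℤ)) →+* ZMod (p ^ n) := Zsqrtd.lift ⟨-(k * i), by
    push_cast
    linear_combination i ^ 2 * hzz - (d : ZMod (p ^ n)) * ((m : ZMod (p ^ n)) * i + 1) * hmi⟩ with hψ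
  have hψa : ∀ z, ψ z = z.re + z.im * (-(k * i)) := fun z => rfl
  set γ : ℤ√(-(d : ℤ)) := ⟨x, y⟩ with hγ
  have hψγ : ψ γ = p * (w * i) := by
    have hw' : (x : ZMod (p ^ n)) * m - y * k = p * w := by
      exact_mod_cast congrArg (Int.cast : ℤ → ZMod (p ^ n)) hw
    rw [hψa]
    linear_combination i * hw' - (x : ZMod (p ^ n)) * hmi
  have hψn : ψ (γ ^ n) = 0 := by rw [map_pow, hψγ, mul_pow, hp0, zero_mul]
  obtain ⟨a, b, hab⟩ : ∃ a b : ℤ, γ ^ n = ⟨a, b⟩ := ⟨_, _, rfl⟩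
  rw [hab, hψa] at hψn
  have hdiv : ((p ^ n : ℕ) : ℤ) ∣ b * k - a * m := by
    rw [← ZMod.intCast_zmod_eq_zero_iff_dvd]
    push_cast
    linear_combination (-(m : ZMod (p ^ n))) * hψn - (b : ZMod (p ^ n)) * k * hmi
  -- `γ ^ n / (k + m √-d) = f + g √-d` with `f = (a k + b m d) / p ^ n` and `g = (b k - a m) / p ^ n`
  obtain ⟨g, hg⟩ := hdiv
  have hdiv2 : ((p ^ n : ℕ) : ℤ) ∣ a * k + b * m * d := by
    have hc : IsCoprime ((p ^ n : ℕ) : ℤ) (m : ℤ) := Nat.isCoprime_iff_coprime.2 hcop.symm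
    refine hc.dvd_of_dvd_mul_left ⟨b - k * g, ?_⟩
    push_cast at hg ⊢
    linear_combination b * hz - k * hg
  obtain ⟨f, hf⟩ := hdiv2
  push_cast at hg hf
  have hpn : (p : ℤ) ^ n ≠ 0 := pow_ne_zero _ (by exact_mod_cast hp.ne_zero)
  refine ⟨γ, ⟨f, g⟩, ?_, ?_, ?_⟩
  · intro h0
    rw [Zsqrtd.ext_iff] at h0
    rcases hxy with h' | h'
    · exact h' h0.1
    · exact h' h0.2
  · rw [hab, Zsqrtd.ext_iff]
    simp only [Zsqrtd.re_mul, Zsqrtd.im_mul]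
    constructor
    · apply mul_left_cancel₀ hpn
      linear_combination k * hf - d * m * hg - a * hz
    · apply mul_left_cancel₀ hpn
      linear_combination k * hg + m * hf - b * hz
  · rw [Zsqrtd.norm_def]
    simp only [hγ]
    have : (0 : ℤ) ≤ d := by positivity
    nlinarith

lemma finite_norm_le {d : ℕ} (hd : 0 < d) (M : ℤ) :
    {β : ℤ√(-(d : ℤ)) | β.norm ≤ M}.Finite := by
  have hinj : Function.Injective (fun β : ℤ√(-(d : ℤ)) => (β.re, β.im)) := by
    intro a b h
    simp only [Prod.mk.injEq] at h
    exact Zsqrtd.ext h.1 h.2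
  refine Set.Finite.subset (((Set.finite_Icc (-M) M).prod (Set.finite_Icc (-M) M)).preimage
    hinj.injOn) fun β hβ => ?_
  have hd' : (1 : ℤ) ≤ d := by exact_mod_cast hd
  rw [Set.mem_ofPred_eq, Zsqrtd.norm_def] at hβ
  have h1 : β.re ^ 2 + β.im ^ 2 ≤ M := by nlinarith [sq_nonneg β.im]
  have h2 : |β.re| ≤ β.re ^ 2 := by
    rw [← sq_abs]; exact Int.le_self_sq _
  have h3 : |β.im| ≤ β.im ^ 2 := by
    rw [← sq_abs]; exact Int.le_self_sq _
  simp only [Set.mem_preimage, Set.mem_prod, Set.mem_Icc, ← abs_le]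
  constructor <;> nlinarith [sq_nonneg β.re, sq_nonneg β.im]

/-- Every solution with `p ∤ k` yields an `IsSol` whose parameters `β`, `θ` lie in a finite set. -/
lemma exists_isSol {n d k p m : ℕ} (hd : 0 < d) (hp : p.Prime) (hpk : ¬ p ∣ k)
    (hn : n ≠ 0) (h : d * m ^ 2 + k ^ 2 = p ^ n) :
    ∃ β : ℤ√(-(d : ℤ)), ∃ θ : ℂ, β ≠ 0 ∧ β.norm ≤ (1 + d) ^ n ∧
      θ ^ n = -toC d β / conj (toC d β) ∧
      ∃ A γ φ, IsSol (toC d).range n k ‖toC d β‖ θ A γ φ ∧ ‖A‖ ^ 2 = (p : ℝ) ^ n := by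
  obtain ⟨γ, β, hγ, hβ, hN⟩ := exists_pow_eq_mul hp hpk hn h
  set a : ℤ√(-(d : ℤ)) := ⟨k, m⟩ with ha
  have hnorm : a.norm = (p : ℤ) ^ n := by
    rw [Zsqrtd.norm_def]
    have : (d : ℤ) * m ^ 2 + k ^ 2 = p ^ n := by exact_mod_cast h
    rw [← this]; simp only [ha]; ring
  have hppos : (0 : ℤ) < (p : ℤ) ^ n := pow_pos (by exact_mod_cast hp.pos) n
  have hβ0 : β ≠ 0 := by
    rintro rfl
    rw [mul_zero] at hβ
    have h1 := one_le_norm_toC hd hγ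
    have h2 := congrArg (toC d) hβ
    rw [map_pow, map_zero] at h2
    rw [eq_zero_of_pow_eq_zero h2, norm_zero] at h1
    linarith
  have hγ1 := one_le_norm_toC hd hγ
  have hβ1 := one_le_norm_toC hd hβ0
  have hA2 : ‖toC d a‖ ^ 2 = (p : ℝ) ^ n := by rw [norm_toC_sq, hnorm]; push_cast; rfl
  have hA0 : 0 < ‖toC d a‖ := by
    have : (0 : ℝ) < (p : ℝ) ^ n := by exact_mod_cast hppos
    by_contra hc
    rw [le_antisymm (not_lt.1 hc) (norm_nonneg _)] at hA2
    norm_num at hA2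
    linarith
  have hmul : toC d γ ^ n = toC d a * toC d β := by rw [← map_pow, hβ, map_mul]
  set A := toC d a with hA
  set g := toC d γ with hg
  set b := toC d β with hb
  have hAne : A ≠ 0 := norm_pos_iff.1 hA0
  have hcAne : conj A ≠ 0 := by rwa [Ne, map_eq_zero]
  have hgne : g ≠ 0 := norm_pos_iff.1 (by linarith)
  have hcgne : conj g ≠ 0 := by rwa [Ne, map_eq_zero]
  have hbne : b ≠ 0 := norm_pos_iff.1 (by linarith)
  have hcbne : conj b ≠ 0 := by rwa [Ne, map_eq_zero]
  have htr : A + conj A = 2 * (k : ℝ) := by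
    rw [hA, conj_toC, toC_apply, toC_apply]
    simp only [ha, Zsqrtd.re_star, Zsqrtd.im_star]
    push_cast; ring
  set w := -A / conj A with hw
  have hw1 : ‖w‖ = 1 := by
    rw [hw, norm_div, norm_neg, RCLike.norm_conj, div_self hA0.ne']
  have hwexp : Complex.exp (w.arg * Complex.I) = w := by
    have := Complex.norm_mul_exp_arg_mul_I w
    rwa [hw1, Complex.ofReal_one, one_mul] at this
  set α := Complex.exp ((1 / n : ℝ) * w.arg * Complex.I) with hα
  have hαne : α ≠ 0 := Complex.exp_ne_zero _
  have hαn : α ^ n = w := by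
    rw [hα, ← Complex.exp_nat_mul, ← hwexp]
    congr 1
    have : (n : ℂ) ≠ 0 := by exact_mod_cast hn
    push_cast
    field_simp
    rw [hwexp]
  refine ⟨β, g / (conj g * α), hβ0, ?_, ?_, A, g, w.arg, ⟨⟨a, rfl⟩, ⟨γ, rfl⟩, htr, ?_, ?_, ?_, ?_⟩, hA2⟩
  · have hmm : γ.norm ^ n = (p : ℤ) ^ n * β.norm := by
      have := congrArg Zsqrtd.norm hβ
      rw [Zsqrtd.norm_mul, hnorm] at this
      rw [← this]
      exact (map_pow (Zsqrtd.normMonoidHom (d := -(d : ℤ))) γ n).symm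
    have hγn : 0 ≤ γ.norm := Zsqrtd.norm_nonneg (by omega) γ
    refine le_of_mul_le_mul_left (a := (p : ℤ) ^ n) ?_ hppos
    rw [← hmm, ← mul_pow, mul_comm (p : ℤ)]
    gcongr
  · have hcm : conj g ^ n = conj A * conj b := by rw [← map_pow, hmul, map_mul]
    rw [← hb, div_pow, mul_pow, hcm, hmul, hαn, hw]
    field_simp
  · rw [← norm_pow, hmul, norm_mul, mul_comm]
  · rw [hwexp, hw]; field_simp
  · have h1 := norm_exp_mul_I_sub_one_ge (Complex.abs_arg_le_pi w)
    have h2 : w - 1 = -(2 * (k : ℝ)) / conj A := by rw [← htr, hw]; field_simp; ring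
    rw [hwexp, h2, norm_div, norm_neg, RCLike.norm_conj, norm_mul, Complex.norm_real,
      Real.norm_of_nonneg (Nat.cast_nonneg k)] at h1
    have h3 : ‖(2 : ℂ)‖ = 2 := by simp
    rw [h3] at h1
    calc |w.arg| = 2 * (|w.arg| / 2) := by ring
      _ ≤ 2 * (2 * k / ‖A‖) := by gcongr
      _ = _ := by ring
  · rw [← hα]; field_simp

/-! ### Finiteness -/

lemma finite_primes_of_bounded {n : ℕ} (hn : n ≠ 0) (P : ℕ → ℂ → Prop) (M : ℝ)
    (hP : ∀ p A, P p A → ‖A‖ ^ 2 = (p : ℝ) ^ n ∧ ‖A‖ < M) :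
    {p : ℕ | ∃ A, P p A}.Finite := by
  refine (Set.finite_Iic ⌊M ^ 2⌋₊).subset ?_
  rintro p ⟨A, hA⟩
  obtain ⟨h1, h2⟩ := hP p A hA
  rw [Set.mem_Iic]
  refine Nat.le_floor ?_
  have h3 : ‖A‖ ^ 2 ≤ M ^ 2 := by gcongr
  have h4 : (p : ℝ) ≤ (p : ℝ) ^ n := by exact_mod_cast Nat.le_self_pow hn p
  linarith

/-- For fixed positive integers `d, k` and fixed odd `n ≥ 5` not divisible by `3`, the set
of primes `p` for which `d·m² + k² = pⁿ` has a solution in positive integers `m` is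
finite. -/
theorem finitely_many_primes_with_solution
    (n d k : ℕ) (hn : 5 ≤ n) (hnodd : Odd n) (hn3 : ¬ (3 ∣ n))
    (hd : 0 < d) (hk : 0 < k) :
    {p : ℕ | p.Prime ∧ ∃ m : ℕ, 0 < m ∧ d * m ^ 2 + k ^ 2 = p ^ n}.Finite := by
  have hn0 : n ≠ 0 := by omega
  -- the finite set of possible pairs `(β, θ)`
  set G : Set (ℤ√(-(d : ℤ)) × ℂ) := {g | g.1 ≠ 0 ∧ g.1.norm ≤ (1 + d) ^ n ∧
    g.2 ^ n = -toC d g.1 / conj (toC d g.1)} with hG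
  have hGfin : G.Finite := by
    refine Set.Finite.subset ((finite_norm_le hd ((1 + d) ^ n)).biUnion fun β _ =>
      (Set.finite_singleton β).prod
        ((nthRoots n (-toC d β / conj (toC d β))).toFinset.finite_toSet)) ?_
    rintro ⟨β, θ⟩ ⟨-, h2, h3⟩
    refine Set.mem_biUnion (x := β) h2 ⟨rfl, ?_⟩
    simpa [mem_nthRoots (Nat.pos_of_ne_zero hn0)] using h3
  have hfib : ∀ g ∈ G, {p : ℕ | ∃ A, ∃ γ φ, IsSol (toC d).range n k ‖toC d g.1‖ g.2 A γ φ ∧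
      ‖A‖ ^ 2 = (p : ℝ) ^ n}.Finite := by
    rintro ⟨β, θ⟩ ⟨hβ, -, -⟩
    have hS : ∀ z ∈ (toC d).range, conj z ∈ (toC d).range := by
      rintro _ ⟨z, rfl⟩
      exact ⟨star z, (conj_toC d z).symm⟩
    have hS1 : ∀ z ∈ (toC d).range, z ≠ 0 → 1 ≤ ‖z‖ := by
      rintro _ ⟨z, rfl⟩ hz
      exact one_le_norm_toC hd fun h => hz (by rw [h, map_zero])
    obtain ⟨X₀, hX₀⟩ := gap_principle (toC d).range hS hS1 hn (k := k) (c := ‖toC d β‖)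
      (by exact_mod_cast hk) (zero_lt_one.trans_le (one_le_norm_toC hd hβ)) θ
    by_cases hex : ∃ A γ φ, IsSol (toC d).range n k ‖toC d β‖ θ A γ φ ∧ X₀ ≤ ‖A‖
    · obtain ⟨A, γ, φ, hA, hXA⟩ := hex
      obtain ⟨Y₀, hY₀⟩ := hX₀ A γ φ hA hXA
      exact finite_primes_of_bounded hn0 _ Y₀ fun p B ⟨η, ψ, hB, hBp⟩ => ⟨hBp, hY₀ B η ψ hB⟩
    · push Not at hex
      exact finite_primes_of_bounded hn0 _ X₀ fun p B ⟨η, ψ, hB, hBp⟩ => ⟨hBp, hex B η ψ hB⟩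
  refine Set.Finite.subset ((Set.finite_Iic k).union (hGfin.biUnion hfib)) ?_
  rintro p ⟨hp, m, -, h⟩
  by_cases hpk : p ∣ k
  · exact Or.inl (Nat.le_of_dvd hk hpk)
  · obtain ⟨β, θ, h1, h2, h3, A, γ, φ, hA⟩ := exists_isSol hd hp hpk hn0 h
    exact Or.inr (Set.mem_biUnion (x := (β, θ)) ⟨h1, h2, h3⟩ ⟨A, γ, φ, hA⟩)
end

section
/- Let n ≥ 5 be an odd integer not divisible by 3 and k a positive integer. Then the set of squarefree positive integers d for which there exists an odd prime p with gcd(p, k) = 1, pⁿ > k², and pⁿ − k² = m²·d for some positive integer m, is infinite. In particular, as p ranges over odd primes, the fields ℚ(√(k² − pⁿ)) form infinitely many distinct imaginary quadratic fields. -/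
/-!
It suffices to produce, for every bound `N`, an element `d` of the set divisible by a prime `q > N`.
By Dirichlet's theorem there is a prime `q ≡ 2 (mod n)` as large as desired (`n` is odd).
Then `n` is coprime to `q (q - 1)`, the order of `(ℤ/q²)ˣ`, so every unit modulo `q²` is an `n`-th
power; in particular `k² + q = vⁿ` for some unit `v`. A second application of Dirichlet's theorem
gives a large prime `p ≡ v (mod q²)`. Then `pⁿ - k² ≡ q (mod q²)`, so `q` divides `pⁿ - k²` exactly
once and hence divides its squarefree part.
-/

/-- Every unit modulo `q²` is an `n`-th power when `q ≡ 2 (mod n)` and `q > n`, as then `n` is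
coprime to `q (q - 1)`. A solution can be taken to be a prime beyond any bound. -/
lemma exists_prime_pow_modEq {n q a : ℕ} (hq : q.Prime) (hn : 0 < n) (hnq : n < q)
    (hq2 : q ≡ 2 [MOD n]) (ha : a.Coprime q) (B : ℕ) :
    ∃ p : ℕ, B < p ∧ p.Prime ∧ p ^ n ≡ a [MOD q ^ 2] := by
  haveI : NeZero (q ^ 2) := ⟨pow_ne_zero 2 hq.ne_zero⟩
  have h1 : Nat.Coprime (q - 1) n := by
    have h : q - 1 ≡ 1 [MOD n] := by
      apply Nat.ModEq.add_right_cancel' 1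
      rwa [Nat.sub_add_cancel hq.one_le]
    rw [Nat.Coprime, h.gcd_eq, Nat.gcd_one_left]
  have h2 : Nat.Coprime q n := (Nat.coprime_of_lt_prime hn.ne' hnq hq)
  have hcard : (Nat.card (ZMod (q ^ 2))ˣ).Coprime n := by
    rw [Nat.card_eq_fintype_card, ZMod.card_units_eq_totient,
      Nat.totient_prime_pow hq (by norm_num : 0 < 2)]
    simpa using h2.mul_left h1
  obtain ⟨v, hv⟩ := (powCoprime hcard).surjective (ZMod.unitOfCoprime a (ha.pow_right 2))
  obtain ⟨p, hpB, hp, hpv⟩ := Nat.forall_exists_prime_gt_and_eq_mod v.isUnit B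
  refine ⟨p, hpB, hp, ?_⟩
  rw [← ZMod.natCast_eq_natCast_iff]
  push_cast
  have := congrArg (Units.val) hv
  simpa [hpv] using this

theorem infinitely_many_squarefree_parts
    (n k : ℕ) (hn : 5 ≤ n) (hnodd : Odd n) (hn3 : ¬ (3 ∣ n)) (hk : 0 < k) :
    {d : ℕ | 0 < d ∧ Squarefree d ∧ ∃ p m : ℕ, p.Prime ∧ Odd p ∧
      Nat.gcd p k = 1 ∧ k ^ 2 < p ^ n ∧ 0 < m ∧
      p ^ n - k ^ 2 = m ^ 2 * d}.Infinite := by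
  apply Set.infinite_of_forall_exists_gt
  intro N
  have h2n : Nat.Coprime 2 n := (Nat.coprime_two_left).2 hnodd
  obtain ⟨q, hqB, hq, hq2⟩ :=
    Nat.forall_exists_prime_gt_and_modEq (N + n + k) (by omega : n ≠ 0) h2n
  have hkq : Nat.Coprime (k ^ 2 + q) q := by
    rw [Nat.coprime_add_self_left]
    exact (Nat.coprime_of_lt_prime hk.ne' (by omega) hq).symm.pow_left 2
  obtain ⟨p, hpB, hp, hpn⟩ :=
    exists_prime_pow_modEq hq (by omega) (by omega) hq2 hkq (k ^ 2 + 2)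
  have hlt : k ^ 2 < p ^ n :=
    (by omega : k ^ 2 < p).trans_le (Nat.le_self_pow (by omega) p)
  have hkp : k < p := by nlinarith
  obtain ⟨d, m, hd, hm, hmd, hsq⟩ := Nat.sq_mul_squarefree_of_pos (Nat.sub_pos_of_lt hlt)
  have hmod : m ^ 2 * d ≡ q [MOD q ^ 2] := by
    apply Nat.ModEq.add_left_cancel' (k ^ 2)
    rwa [hmd, Nat.add_sub_cancel' hlt.le]
  have hqd : q ∣ d := by
    have h : q ∣ m ^ 2 * d :=
      ((hmod.of_dvd (dvd_pow_self q two_ne_zero)).dvd_iff dvd_rfl).2 dvd_rfl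
    refine (hq.dvd_mul.1 h).resolve_left fun h' => ?_
    -- If `q ∣ m`, then `q²` would divide `m² d`, hence also `q`.
    have h3 : q ^ 2 ∣ m ^ 2 * d := (pow_dvd_pow_of_dvd (hq.dvd_of_dvd_pow h') 2).mul_right d
    have h4 := Nat.le_of_dvd hq.pos ((hmod.dvd_iff dvd_rfl).1 h3)
    nlinarith [hq.two_le]
  refine ⟨d, ⟨hd, hsq, p, m, hp, hp.odd_of_ne_two (by omega), ?_, hlt, hm, hmd.symm⟩, ?_⟩
  · exact Nat.coprime_of_lt_prime hk.ne' hkp hp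
  · have := Nat.le_of_dvd hd hqd
    omega
end
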